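/- arXiv:1812.03031 — 3 statements merged into one kernel-verified Lean document; each statement's English description precedes it below -/
import Mathlib

section
/- For every mutual information value 0 < β ≤ 1 and every positive integer M, the binary information distillation function satisfies β · f_lower((M-1)/max{log(1/β), 1}) ≤ ID_M(2, β) ≤ β · f_upper((M-1)/max{log(1/β), 1}), where f_lower(t) = t/208 for t < 104 and f_lower(t) = 1 - 52/t for t ≥ 104, and f_upper(t) = min{3t, 1}. -/
/-!
Both bounds rest on writing `I(X;Y) = ∑ w(y) v(y)`, where `w(y) = P(Y = y)` and `v(y)` is the
relative entropy of the posterior of `X` given `y` with respect to the prior. Put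
`L = max(log(1/β), 1)` and `t = (M - 1) / L`.

**Lower bound.** Quantize `v` to the levels `T j = β ((1 + 1/n)^j - 1)`, separately on the two
sides of the prior. Since binary relative entropy is monotone away from the prior, merging symbols
on the same side with `v ≥ T j` yields a symbol with `v ≥ T j` (`merge_right`, `merge_left`), so a
fraction of at least `1 - 2/(n+1)` of `β` survives (`exists_cells`). The number of levels is bounded
because `β ≤ I(X;Y) ≤ h(q) ≤ 3 √q` keeps the prior probabilities `q`, hence also `v`, under control
(`logb_inv_le`): `2 n A` cells are enough for any integer `A ≥ 8 L` (`exists_good_cells`). For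
`t ≥ 104` there are enough levels for all the cells with `n = ⌊t / 18⌋`; for `t < 104` take `n = 3`,
keep the best cells and merge the others (`exists_heavy_subset`).

**Upper bound.** If `3 t ≥ 1` an erasure channel has `I(X;Y) = β` (`exists_erasure`), and for
`M = 1` there is nothing to distill. Otherwise `log(1/β) > 3 (M - 1) ≥ 3`. Take `X` uniform and let
the posterior bias, as a function of the quantile `P` of `Y`, be a discretized derivative of
`κ √(P (1-P))`. Every cell of weight `W` then has total bias `D` with `D² ≤ κ² W (1 - W)`
(`sq_sum_le`), and hence carries at most `(3/4) κ² (1 - W)` bits; over `M` cells this sums to at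
most `(3/4) κ² (M - 1)` (`exists_spread`). On the other hand `I(X;Y)` is essentially
`κ² (1 + ½ ln(1/ρ²)) / (2 ln 2)` with odds truncated at `ρ² = 5 κ²`, the logarithm being the
integral of the squared bias; the choice `κ² = 4 β / log(1/β)` makes it at least `β`
(`exists_hard`).
-/

open scoped BigOperators

/-- Mutual information (in bits) of a joint probability mass function `p` on `𝒳 × 𝒴`,
with the convention `0 · log 0 = 0`. -/
noncomputable def miBits {𝒳 𝒴 : Type*} (p : 𝒳 → 𝒴 → ℝ) : ℝ :=
  ∑' x, ∑' y, p x y * Real.logb 2 (p x y / ((∑' y', p x y') * (∑' x', p x' y)))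

/-- `p` is a joint probability mass function. -/
def IsJointPMF {𝒳 𝒴 : Type*} (p : 𝒳 → 𝒴 → ℝ) : Prop :=
  (∀ x y, 0 ≤ p x y) ∧ Summable (fun xy : 𝒳 × 𝒴 => p xy.1 xy.2) ∧ (∑' x, ∑' y, p x y) = 1

/-- Joint pmf of `(X, f(Y))` when `(X,Y) ~ p` and `f` is a deterministic `M`-level quantizer. -/
noncomputable def quantJoint {𝒳 𝒴 : Type*} (p : 𝒳 → 𝒴 → ℝ) {M : ℕ} (f : 𝒴 → Fin M) :
    𝒳 → Fin M → ℝ :=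
  fun x m => ∑' y, if f y = m then p x y else 0

/-- `I(X;[Y]_M)`: the best mutual information achievable by a deterministic `M`-level
quantizer of `Y`. -/
noncomputable def quantMI {𝒳 𝒴 : Type*} (p : 𝒳 → 𝒴 → ℝ) (M : ℕ) : ℝ :=
  ⨆ f : 𝒴 → Fin M, miBits (quantJoint p f)

/-- The information distillation function `ID_M(K, β)`. -/
noncomputable def ID (M K : ℕ) (β : ℝ) : ℝ :=
  sInf {v | ∃ p : Fin K → ℕ → ℝ, IsJointPMF p ∧ β ≤ miBits p ∧ v = quantMI p M}

/-- Binary entropy function (bits). -/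
noncomputable def hBin (t : ℝ) : ℝ :=
  -(t * Real.logb 2 t) - (1 - t) * Real.logb 2 (1 - t)

/-- `f_lower` from Theorem 1. -/
noncomputable def fLower (t : ℝ) : ℝ := if t < 104 then t / 208 else 1 - 52 / t

/-- `f_upper` from Theorem 1. -/
noncomputable def fUpper (t : ℝ) : ℝ := min (3 * t) 1

/-! ### Information terms and binary relative entropy -/

/-- The contribution of one output symbol with joint masses `a = P(X=0,Y=y)`, `b = P(X=1,Y=y)`
to the mutual information (in bits), when `X` has marginal masses `q0`, `q1`. -/
noncomputable def infoTerm (q0 q1 a b : ℝ) : ℝ :=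
  a * Real.logb 2 (a / (q0 * (a + b))) + b * Real.logb 2 (b / (q1 * (a + b)))

lemma infoTerm_comm (q0 q1 a b : ℝ) : infoTerm q0 q1 a b = infoTerm q1 q0 b a := by
  unfold infoTerm
  rw [add_comm b a]
  ring

lemma miBits_eq_tsum_infoTerm {ι : Type*} (p : Fin 2 → ι → ℝ)
    (h0 : Summable fun y => p 0 y *
      Real.logb 2 (p 0 y / ((∑' y', p 0 y') * (p 0 y + p 1 y))))
    (h1 : Summable fun y => p 1 y *
      Real.logb 2 (p 1 y / ((∑' y', p 1 y') * (p 0 y + p 1 y)))) :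
    miBits p = ∑' y, infoTerm (∑' y', p 0 y') (∑' y', p 1 y') (p 0 y) (p 1 y) := by
  unfold miBits infoTerm
  simp only [tsum_fintype, Fin.sum_univ_two]
  rw [h0.tsum_add h1]

/-- Upper half of the estimate of a single summand: it is at most its share of the entropy. -/
lemma mul_logb_le {q a w : ℝ} (hq : 0 < q) (ha : 0 ≤ a) (haw : a ≤ w) :
    a * Real.logb 2 (a / (q * w)) ≤ a * Real.logb 2 (1 / q) := by
  rcases ha.eq_or_lt with rfl | ha
  · simp
  have hw : 0 < w := ha.trans_le haw
  apply mul_le_mul_of_nonneg_left _ ha.le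
  apply Real.logb_le_logb_of_le (by norm_num) (by positivity)
  rw [div_le_div_iff₀ (by positivity) hq]
  nlinarith

/-- Lower half of the estimate of a single summand, from `log x ≤ x - 1`. -/
lemma le_mul_logb {q a w : ℝ} (hq : 0 < q) (ha : 0 ≤ a) (haw : a ≤ w) :
    (a - q * w) / Real.log 2 ≤ a * Real.logb 2 (a / (q * w)) := by
  have hl : 0 < Real.log 2 := Real.log_pos (by norm_num)
  rcases ha.eq_or_lt with rfl | ha
  · simp only [zero_sub, zero_mul]
    apply div_nonpos_of_nonpos_of_nonneg _ hl.le
    nlinarith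
  have hw : 0 < w := ha.trans_le haw
  unfold Real.logb
  rw [← mul_div_assoc]
  apply div_le_div_of_nonneg_right _ hl.le
  have h1 := Real.one_sub_inv_le_log_of_pos (x := a / (q * w)) (by positivity)
  have h2 : a - q * w = a * (1 - (a / (q * w))⁻¹) := by field_simp
  rw [h2]
  exact mul_le_mul_of_nonneg_left h1 ha.le

lemma infoTerm_nonneg {q0 q1 a b : ℝ} (h0 : 0 < q0) (h1 : 0 < q1) (hq : q0 + q1 = 1)
    (ha : 0 ≤ a) (hb : 0 ≤ b) : 0 ≤ infoTerm q0 q1 a b := by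
  have e0 := le_mul_logb (w := a + b) h0 ha (by linarith)
  have e1 := le_mul_logb (w := a + b) h1 hb (by linarith)
  have : (a - q0 * (a + b)) / Real.log 2 + (b - q1 * (a + b)) / Real.log 2 = 0 := by
    rw [← add_div]
    have : a - q0 * (a + b) + (b - q1 * (a + b)) = 0 := by linear_combination (-(a + b)) * hq
    rw [this, zero_div]
  unfold infoTerm
  linarith

lemma infoTerm_le {q0 q1 a b : ℝ} (h0 : 0 < q0) (h1 : 0 < q1)
    (ha : 0 ≤ a) (hb : 0 ≤ b) :
    infoTerm q0 q1 a b ≤ a * Real.logb 2 (1 / q0) + b * Real.logb 2 (1 / q1) :=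
  add_le_add (mul_logb_le h0 ha (by linarith)) (mul_logb_le h1 hb (by linarith))

/-- Binary relative entropy (in bits) of `Bern(u)` with respect to `Bern(q)`. -/
noncomputable def klBit (q u : ℝ) : ℝ :=
  (-Real.binEntropy u - u * Real.log q - (1 - u) * Real.log (1 - q)) / Real.log 2

lemma infoTerm_eq_klBit {q0 q1 a b : ℝ} (h0 : 0 < q0) (h1 : 0 < q1) (hq : q0 + q1 = 1)
    (ha : 0 ≤ a) (hb : 0 ≤ b) (hw : 0 < a + b) :
    infoTerm q0 q1 a b = (a + b) * klBit q1 (b / (a + b)) := by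
  have hl : Real.log 2 ≠ 0 := (Real.log_pos (by norm_num)).ne'
  have e0 : 1 - q1 = q0 := by linarith
  have e1 : 1 - b / (a + b) = a / (a + b) := by field_simp; ring
  have key : ∀ q x : ℝ, 0 < q → 0 ≤ x → x * Real.log (x / (q * (a + b))) =
      x * Real.log (x / (a + b)) - x * Real.log q := by
    intro q x hq hx
    rcases hx.eq_or_lt with rfl | hx
    · simp
    rw [Real.log_div hx.ne' (by positivity), Real.log_div hx.ne' hw.ne',
      Real.log_mul hq.ne' hw.ne']
    ring
  unfold infoTerm klBit Real.logb
  rw [Real.binEntropy_eq_negMulLog_add_negMulLog_one_sub, e0, e1]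
  unfold Real.negMulLog
  rw [← mul_div_assoc, ← mul_div_assoc, key q0 a h0 ha, key q1 b h1 hb]
  field_simp
  ring

lemma klBit_continuous (q : ℝ) : Continuous (klBit q) := by
  unfold klBit
  fun_prop

lemma klBit_nonneg {q u : ℝ} (h0 : 0 < q) (h1 : q < 1) (hu0 : 0 ≤ u) (hu1 : u ≤ 1) :
    0 ≤ klBit q u := by
  have h := infoTerm_nonneg (q0 := 1 - q) (q1 := q) (a := 1 - u) (b := u)
    (by linarith) h0 (by ring) (by linarith) hu0
  rw [infoTerm_eq_klBit (by linarith) h0 (by ring) (by linarith) hu0 (by linarith)] at h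
  simpa using h

lemma klBit_self {q : ℝ} : klBit q q = 0 := by
  unfold klBit
  rw [Real.binEntropy_eq_negMulLog_add_negMulLog_one_sub]
  unfold Real.negMulLog
  ring

lemma klBit_convexOn (q : ℝ) : ConvexOn ℝ (Set.Icc 0 1) (klBit q) := by
  have hl : 0 < Real.log 2 := Real.log_pos (by norm_num)
  have hc : ConcaveOn ℝ (Set.Icc 0 1) Real.binEntropy := Real.strictConcave_binEntropy.concaveOn
  refine ⟨convex_Icc _ _, ?_⟩
  intro x hx y hy s t hs ht hst
  have := hc.2 hx hy hs ht hst
  simp only [smul_eq_mul] at this ⊢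
  unfold klBit
  rw [← mul_div_assoc, ← mul_div_assoc, ← add_div]
  apply div_le_div_of_nonneg_right _ hl.le
  have hs' : s = 1 - t := by linarith
  subst hs'
  nlinarith

/-- Moving away from `q` to the right increases the relative entropy. -/
lemma klBit_mono {q u v : ℝ} (h0 : 0 < q) (h1 : q < 1) (hqu : q ≤ u) (huv : u ≤ v)
    (hv : v ≤ 1) : klBit q u ≤ klBit q v := by
  have hv0 := klBit_nonneg h0 h1 (by linarith : 0 ≤ v) hv
  rcases (hqu.trans huv).eq_or_lt with h | h
  · have : u = v := by linarith
    rw [this]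
  have hc := (klBit_convexOn q).2 (show q ∈ Set.Icc (0 : ℝ) 1 from ⟨h0.le, h1.le⟩)
    (show v ∈ Set.Icc (0 : ℝ) 1 from ⟨by linarith, hv⟩)
    (show 0 ≤ (v - u) / (v - q) from div_nonneg (by linarith) (by linarith))
    (show 0 ≤ (u - q) / (v - q) from div_nonneg (by linarith) (by linarith))
    (by rw [← add_div, div_eq_one_iff_eq] <;> linarith)
  have hvq : v - q ≠ 0 := by linarith
  have e : (v - u) / (v - q) * q + (u - q) / (v - q) * v = u := by field_simp; ring
  simp only [smul_eq_mul, e, klBit_self, mul_zero, zero_add] at hc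
  refine hc.trans (mul_le_of_le_one_left hv0 ?_)
  rw [div_le_one (by linarith)]
  linarith

/-- Merging output symbols whose posteriors all lie on the same side of the prior, and each of
which has relative entropy at least `T`, gives a symbol of relative entropy at least `T`. -/
lemma merge_right {q0 q1 T : ℝ} (h0 : 0 < q0) (h1 : 0 < q1) (hq : q0 + q1 = 1)
    {a b : ℕ → ℝ} (ha : ∀ y, 0 ≤ a y) (hb : ∀ y, 0 ≤ b y) (sa : Summable a) (sb : Summable b)
    (hside : ∀ y, q1 * (a y + b y) ≤ b y)
    (hT : ∀ y, T * (a y + b y) ≤ infoTerm q0 q1 (a y) (b y)) :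
    T * (∑' y, a y + ∑' y, b y) ≤ infoTerm q0 q1 (∑' y, a y) (∑' y, b y) := by
  have hA : 0 ≤ ∑' y, a y := tsum_nonneg ha
  have hB : 0 ≤ ∑' y, b y := tsum_nonneg hb
  by_cases hz : ∀ y, a y + b y = 0
  · have ha0 : ∀ y, a y = 0 := fun y => by linarith [hz y, ha y, hb y]
    have hb0 : ∀ y, b y = 0 := fun y => by linarith [hz y, ha y, hb y]
    simp [ha0, hb0, infoTerm]
  push Not at hz
  obtain ⟨y0, hy0⟩ := hz
  have hy0' : 0 < a y0 + b y0 := lt_of_le_of_ne (by linarith [ha y0, hb y0]) hy0.symm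
  have hmem : ∀ y, 0 < a y + b y →
      b y / (a y + b y) ∈ Set.Icc q1 1 ∩ {u | T ≤ klBit q1 u} := by
    intro y hy
    refine ⟨⟨?_, ?_⟩, ?_⟩
    · rw [le_div_iff₀ hy]; exact hside y
    · rw [div_le_one hy]; linarith [ha y]
    · have := hT y
      rw [infoTerm_eq_klBit h0 h1 hq (ha y) (hb y) hy, mul_comm T] at this
      exact le_of_mul_le_mul_left this hy
  have hcpt : IsCompact (Set.Icc q1 1 ∩ {u | T ≤ klBit q1 u}) :=
    isCompact_Icc.inter_right (isClosed_le continuous_const (klBit_continuous q1))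
  -- the least admissible posterior; it stays a lower bound after averaging
  obtain ⟨c, ⟨⟨hc1, hc2⟩, hcT⟩, hcl⟩ := hcpt.exists_isLeast ⟨_, hmem y0 hy0'⟩
  have hlow : ∀ y, c * (a y + b y) ≤ b y := by
    intro y
    rcases (add_nonneg (ha y) (hb y)).eq_or_lt with h | h
    · rw [← h, mul_zero]; exact hb y
    · exact (le_div_iff₀ h).1 (hcl (hmem y h))
  have hsum : c * (∑' y, a y + ∑' y, b y) ≤ ∑' y, b y := by
    rw [← sa.tsum_add sb, ← tsum_mul_left]
    exact Summable.tsum_le_tsum hlow ((sa.add sb).mul_left c) sb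
  have hpos : 0 < ∑' y, a y + ∑' y, b y := by
    rw [← sa.tsum_add sb]
    exact (sa.add sb).tsum_pos (fun y => add_nonneg (ha y) (hb y)) y0 hy0'
  rw [infoTerm_eq_klBit h0 h1 hq hA hB hpos, mul_comm T]
  apply mul_le_mul_of_nonneg_left _ hpos.le
  refine le_trans hcT (klBit_mono h1 (by linarith) hc1 ((le_div_iff₀ hpos).2 hsum) ?_)
  rw [div_le_one hpos]
  linarith

lemma merge_left {q0 q1 T : ℝ} (h0 : 0 < q0) (h1 : 0 < q1) (hq : q0 + q1 = 1)
    {a b : ℕ → ℝ} (ha : ∀ y, 0 ≤ a y) (hb : ∀ y, 0 ≤ b y) (sa : Summable a) (sb : Summable b)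
    (hside : ∀ y, b y ≤ q1 * (a y + b y))
    (hT : ∀ y, T * (a y + b y) ≤ infoTerm q0 q1 (a y) (b y)) :
    T * (∑' y, a y + ∑' y, b y) ≤ infoTerm q0 q1 (∑' y, a y) (∑' y, b y) := by
  have := merge_right (T := T) h1 h0 (by linarith) hb ha sb sa
    (fun y => by have := hside y; have : q0 = 1 - q1 := by linarith
                 subst this; linarith)
    (fun y => by rw [infoTerm_comm, add_comm]; exact hT y)
  rwa [infoTerm_comm, add_comm] at this

/-! ### Quantized information of a binary source -/

lemma quantJoint_nonneg {ι κ : Type*} {p : κ → ι → ℝ} (hp : ∀ x y, 0 ≤ p x y) {M : ℕ}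
    (f : ι → Fin M) (x : κ) (m : Fin M) : 0 ≤ quantJoint p f x m := by
  unfold quantJoint
  refine tsum_nonneg fun y => ?_
  split_ifs
  exacts [hp x y, le_rfl]

lemma summable_ite {ι : Type*} {a : ι → ℝ} (ha : Summable a) (P : ι → Prop)
    [DecidablePred P] : Summable fun y => if P y then a y else 0 := by
  have := ha.indicator {y | P y}
  refine this.congr fun y => ?_
  simp [Set.indicator_apply]

/-- Splitting a sum along the fibres of a map into a finite type. -/
lemma sum_tsum_fiber {ι κ : Type*} [Fintype κ] [DecidableEq κ] {a : ι → ℝ} (ha : Summable a)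
    (F : ι → κ) (T : κ → ℝ) :
    ∑ i, T i * (∑' y, if F y = i then a y else 0) = ∑' y, T (F y) * a y := by
  simp_rw [← tsum_mul_left]
  rw [← Summable.tsum_finsetSum fun i _ => (summable_ite ha _).mul_left _]
  refine tsum_congr fun y => ?_
  simp

lemma sum_quantJoint {ι κ : Type*} {p : κ → ι → ℝ} (x : κ) (hs : Summable (p x)) {M : ℕ}
    (f : ι → Fin M) : ∑ m, quantJoint p f x m = ∑' y, p x y := by
  have := sum_tsum_fiber hs f (fun _ => 1)
  simpa [quantJoint] using this

lemma miBits_quantJoint {ι : Type*} {p : Fin 2 → ι → ℝ} (hs : ∀ x, Summable (p x)) {M : ℕ}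
    (f : ι → Fin M) :
    miBits (quantJoint p f) = ∑ m, infoTerm (∑' y, p 0 y) (∑' y, p 1 y)
      (quantJoint p f 0 m) (quantJoint p f 1 m) := by
  rw [miBits_eq_tsum_infoTerm _ (Summable.of_finite) (Summable.of_finite)]
  simp only [tsum_fintype, sum_quantJoint _ (hs _)]

/-- A joint pmf with binary first coordinate, unpacked. -/
lemma isJointPMF_two {ι : Type*} {p : Fin 2 → ι → ℝ} (hp : IsJointPMF p) :
    (∀ x, Summable (p x)) ∧ (∑' y, p 0 y) + (∑' y, p 1 y) = 1 := by
  obtain ⟨_, h2, h3⟩ := hp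
  refine ⟨fun x => h2.comp_injective (i := fun y => (x, y)) (fun a b h => by simpa using h), ?_⟩
  simpa [tsum_fintype, Fin.sum_univ_two] using h3

lemma summable_infoSummand {a w : ℕ → ℝ} {q : ℝ} (hq : 0 < q) (ha : ∀ y, 0 ≤ a y)
    (haw : ∀ y, a y ≤ w y) (sa : Summable a) (sw : Summable w) :
    Summable fun y => a y * Real.logb 2 (a y / (q * w y)) := by
  have hl : 0 < Real.log 2 := Real.log_pos (by norm_num)
  have s1 : Summable fun y => (a y - q * w y) / Real.log 2 :=
    (sa.sub (sw.mul_left q)).div_const _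
  have s2 : Summable fun y => a y * Real.logb 2 (1 / q) := sa.mul_right _
  have s3 : Summable fun y => a y * Real.logb 2 (a y / (q * w y)) -
      (a y - q * w y) / Real.log 2 := by
    refine Summable.of_nonneg_of_le (fun y => ?_) (fun y => ?_) (s2.sub s1)
    · linarith [le_mul_logb hq (ha y) (haw y)]
    · linarith [mul_logb_le hq (ha y) (haw y)]
  simpa using s3.add s1

/-- A positive amount of mutual information forces `X` to be nondegenerate. -/
lemma marginal_pos {p : Fin 2 → ℕ → ℝ} (hp : IsJointPMF p) (hI : 0 < miBits p) :
    0 < ∑' y, p 0 y ∧ 0 < ∑' y, p 1 y := by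
  obtain ⟨hs, hsum⟩ := isJointPMF_two hp
  have hzero : ∀ x, ∑' y, p x y = 0 → ∀ y, p x y = 0 := by
    intro x hx y
    have := (hs x).hasSum
    rw [hx, hasSum_zero_iff_of_nonneg (hp.1 x)] at this
    exact congrFun this y
  have hn : ∀ x, 0 ≤ ∑' y, p x y := fun x => tsum_nonneg (hp.1 x)
  constructor
  · refine lt_of_le_of_ne (hn 0) fun h => hI.ne' ?_
    have hz := hzero 0 h.symm
    have e1 : ∑' y, p 1 y = 1 := by linarith
    have : ∀ y, p 1 y * Real.logb 2 (p 1 y / p 1 y) = 0 := by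
      intro y
      by_cases hy : p 1 y = 0 <;> simp [hy]
    simp [miBits, tsum_fintype, Fin.sum_univ_two, hz, e1, this]
  · refine lt_of_le_of_ne (hn 1) fun h => hI.ne' ?_
    have hz := hzero 1 h.symm
    have e1 : ∑' y, p 0 y = 1 := by linarith
    have : ∀ y, p 0 y * Real.logb 2 (p 0 y / p 0 y) = 0 := by
      intro y
      by_cases hy : p 0 y = 0 <;> simp [hy]
    simp [miBits, tsum_fintype, Fin.sum_univ_two, hz, e1, this]

lemma miBits_nat {p : Fin 2 → ℕ → ℝ} (hp : IsJointPMF p)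
    (h0 : 0 < ∑' y, p 0 y) (h1 : 0 < ∑' y, p 1 y) :
    Summable (fun y => infoTerm (∑' y, p 0 y) (∑' y, p 1 y) (p 0 y) (p 1 y)) ∧
    miBits p = ∑' y, infoTerm (∑' y, p 0 y) (∑' y, p 1 y) (p 0 y) (p 1 y) := by
  obtain ⟨hs, -⟩ := isJointPMF_two hp
  have s0 := summable_infoSummand (w := fun y => p 0 y + p 1 y) h0 (hp.1 0)
    (fun y => by linarith [hp.1 1 y]) (hs 0) ((hs 0).add (hs 1))
  have s1 := summable_infoSummand (w := fun y => p 0 y + p 1 y) h1 (hp.1 1)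
    (fun y => by linarith [hp.1 0 y]) (hs 1) ((hs 0).add (hs 1))
  exact ⟨s0.add s1, miBits_eq_tsum_infoTerm p s0 s1⟩

lemma miBits_quantJoint_nonneg {p : Fin 2 → ℕ → ℝ} (hp : IsJointPMF p) {M : ℕ}
    (f : ℕ → Fin M) : 0 ≤ miBits (quantJoint p f) := by
  obtain ⟨hs, hsum⟩ := isJointPMF_two hp
  rw [miBits_quantJoint hs]
  refine Finset.sum_nonneg fun m _ => ?_
  have hq := fun x => quantJoint_nonneg hp.1 f x m
  have hn : ∀ x, 0 ≤ ∑' y, p x y := fun x => tsum_nonneg (hp.1 x)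
  have hle : ∀ x, quantJoint p f x m ≤ ∑' y, p x y := by
    intro x
    rw [← sum_quantJoint x (hs x) f]
    exact Finset.single_le_sum (fun m _ => quantJoint_nonneg hp.1 f x m) (Finset.mem_univ m)
  have key : ∀ t : ℝ, t * Real.logb 2 (t / t) = 0 := by
    intro t
    by_cases ht : t = 0 <;> simp [ht]
  rcases (hn 0).eq_or_lt with h | h
  · have e0 : quantJoint p f 0 m = 0 := le_antisymm (by linarith [hle 0]) (hq 0)
    have e1 : ∑' y, p 1 y = 1 := by linarith
    simp [infoTerm, e0, e1, key]
  rcases (hn 1).eq_or_lt with h' | h'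
  · have e0 : quantJoint p f 1 m = 0 := le_antisymm (by linarith [hle 1]) (hq 1)
    have e1 : ∑' y, p 0 y = 1 := by linarith
    simp [infoTerm, e0, e1, key]
  exact infoTerm_nonneg h h' hsum (hq 0) (hq 1)

lemma quantMI_nonneg {p : Fin 2 → ℕ → ℝ} (hp : IsJointPMF p) (M : ℕ) : 0 ≤ quantMI p M :=
  Real.iSup_nonneg fun f => miBits_quantJoint_nonneg hp f

lemma le_quantMI {p : Fin 2 → ℕ → ℝ} (hp : IsJointPMF p)
    (h0 : 0 < ∑' y, p 0 y) (h1 : 0 < ∑' y, p 1 y) {M : ℕ} (f : ℕ → Fin M) :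
    miBits (quantJoint p f) ≤ quantMI p M := by
  obtain ⟨hs, -⟩ := isJointPMF_two hp
  refine le_ciSup (f := fun f : ℕ → Fin M => miBits (quantJoint p f)) ?_ f
  refine ⟨(∑' y, p 0 y) * Real.logb 2 (1 / ∑' y, p 0 y) +
    (∑' y, p 1 y) * Real.logb 2 (1 / ∑' y, p 1 y), ?_⟩
  rintro _ ⟨f, rfl⟩
  simp only [miBits_quantJoint hs]
  refine (Finset.sum_le_sum fun m _ => infoTerm_le h0 h1 (quantJoint_nonneg hp.1 f 0 m)
    (quantJoint_nonneg hp.1 f 1 m)).trans_eq ?_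
  rw [Finset.sum_add_distrib, ← Finset.sum_mul, ← Finset.sum_mul, sum_quantJoint 0 (hs 0),
    sum_quantJoint 1 (hs 1)]

/-- Among `N` real numbers some `k` of them carry at least a fraction `k / N` of the
total. -/
lemma exists_heavy_subset {ι : Type*} [DecidableEq ι] (v : ι → ℝ) (S : Finset ι)
    (k : ℕ) (hk : k ≤ S.card) :
    ∃ T ⊆ S, T.card = k ∧ (k : ℝ) * ∑ i ∈ S, v i ≤ (S.card : ℝ) * ∑ i ∈ T, v i := by
  obtain ⟨d, hd⟩ := Nat.exists_eq_add_of_le hk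
  induction d generalizing S with
  | zero => exact ⟨S, subset_rfl, by omega, by rw [hd, add_zero]⟩
  | succ d ih =>
    have hne : S.Nonempty := Finset.card_pos.1 (by omega)
    obtain ⟨i, hi, hmin⟩ := S.exists_min_image v hne
    have hc : (S.erase i).card = S.card - 1 := Finset.card_erase_of_mem hi
    obtain ⟨T, hT, hTk, hle⟩ := ih (S.erase i) (by omega) (by omega)
    refine ⟨T, hT.trans (Finset.erase_subset _ _), hTk, ?_⟩
    have hsum : v i + ∑ j ∈ S.erase i, v j = ∑ j ∈ S, v j := Finset.add_sum_erase S v hi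
    have hge : (k : ℝ) * v i ≤ ∑ j ∈ T, v j := by
      rw [← hTk, ← nsmul_eq_mul]
      exact Finset.card_nsmul_le_sum T v _ fun j hj => hmin j (Finset.mem_of_mem_erase (hT hj))
    have hcr : ((S.erase i).card : ℝ) = S.card - 1 := by
      rw [hc, Nat.cast_sub (by omega)]; simp
    rw [hcr] at hle
    rw [← hsum]
    linarith

/-- The information term of the cell `F ⁻¹ {i}`. -/
noncomputable def cellInfo {κ : Type*} [DecidableEq κ] (p : Fin 2 → ℕ → ℝ) (F : ℕ → κ)
    (i : κ) : ℝ :=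
  infoTerm (∑' y, p 0 y) (∑' y, p 1 y) (∑' y, if F y = i then p 0 y else 0)
    (∑' y, if F y = i then p 1 y else 0)

/-- Keeping the cells in `T` and merging all the others uses `T.card + 1` levels. -/
lemma sum_cellInfo_le_quantMI {κ : Type*} [DecidableEq κ] {p : Fin 2 → ℕ → ℝ}
    (hp : IsJointPMF p) (h0 : 0 < ∑' y, p 0 y) (h1 : 0 < ∑' y, p 1 y) (F : ℕ → κ)
    (T : Finset κ) {M : ℕ} (hT : T.card + 1 ≤ M) :
    ∑ i ∈ T, cellInfo p F i ≤ quantMI p M := by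
  classical
  obtain ⟨hs, hsum⟩ := isJointPMF_two hp
  obtain ⟨M, rfl⟩ : ∃ M', M = M' + 1 := ⟨M - 1, by omega⟩
  let e : κ → Fin (M + 1) := fun i =>
    if h : i ∈ T then (Fin.castLE (by omega : T.card ≤ M) (T.equivFin ⟨i, h⟩)).castSucc
    else Fin.last M
  have he : ∀ i ∈ T, ∀ j, e j = e i ↔ j = i := by
    intro i hi j
    refine ⟨fun h => ?_, fun h => by rw [h]⟩
    by_cases hj : j ∈ T
    · simp only [e, hi, hj, dif_pos] at h
      have := Fin.castLE_injective _ (Fin.castSucc_injective _ h)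
      simpa using this
    · simp only [e, hi, hj, dif_pos, dif_neg, not_false_eq_true] at h
      exact absurd h.symm (Fin.castSucc_lt_last _).ne
  refine le_trans ?_ (le_quantMI hp h0 h1 (fun y => e (F y)))
  rw [miBits_quantJoint hs]
  have hcell : ∀ i ∈ T, cellInfo p F i = infoTerm (∑' y, p 0 y) (∑' y, p 1 y)
      (quantJoint p (fun y => e (F y)) 0 (e i)) (quantJoint p (fun y => e (F y)) 1 (e i)) := by
    intro i hi
    simp only [cellInfo, quantJoint, he i hi]
  rw [Finset.sum_congr rfl hcell, ← Finset.sum_image (s := T) (g := e)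
    (f := fun m => infoTerm (∑' y, p 0 y) (∑' y, p 1 y)
      (quantJoint p (fun y => e (F y)) 0 m) (quantJoint p (fun y => e (F y)) 1 m))
    (fun i _ j hj h => (he j hj i).1 h)]
  exact Finset.sum_le_sum_of_subset_of_nonneg (Finset.subset_univ _) fun m _ _ =>
    infoTerm_nonneg h0 h1 hsum (quantJoint_nonneg hp.1 _ _ _) (quantJoint_nonneg hp.1 _ _ _)

/-! ### Lower bound -/

lemma exists_bin {T : ℕ → ℝ} {v : ℝ} (h0 : T 0 ≤ v) (K : ℕ) (hK : v < T K) :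
    ∃ j : Fin K, T j ≤ v ∧ v < T (j + 1) := by
  induction K with
  | zero => exact absurd h0 (not_le.2 hK)
  | succ K ih =>
    rcases lt_or_ge v (T K) with h | h
    · obtain ⟨j, hj⟩ := ih h
      exact ⟨j.castSucc, hj⟩
    · exact ⟨Fin.last K, h, hK⟩

/-- Quantizing the relative entropy `v` of each output symbol to the levels
`T j = β ((1 + 1/n)^j - 1)`, separately on the two sides of the prior, loses little: consecutive
levels satisfy `T (j+1) = T j + (T j + β) / n`. -/
lemma exists_cells {p : Fin 2 → ℕ → ℝ} (hp : IsJointPMF p) (h0 : 0 < ∑' y, p 0 y)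
    (h1 : 0 < ∑' y, p 1 y) {β D : ℝ} (hβ : 0 < β) {n K : ℕ} (hn : 0 < n)
    (hD : ∀ y, infoTerm (∑' y, p 0 y) (∑' y, p 1 y) (p 0 y) (p 1 y) ≤ D * (p 0 y + p 1 y))
    (hD0 : 0 ≤ D) (hK : D < β * ((1 + 1 / (n : ℝ)) ^ K - 1)) :
    ∃ F : ℕ → Bool × Fin K, (n * miBits p - β) / (n + 1) ≤ ∑ i, cellInfo p F i := by
  classical
  obtain ⟨hs, hsum⟩ := isJointPMF_two hp
  obtain ⟨sI, hI⟩ := miBits_nat hp h0 h1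
  set q0 := ∑' y, p 0 y with hq0
  set q1 := ∑' y, p 1 y with hq1
  have hn' : (0 : ℝ) < n := by exact_mod_cast hn
  set T : ℕ → ℝ := fun j => β * ((1 + 1 / (n : ℝ)) ^ j - 1) with hTdef
  have hTstep : ∀ j, n * T (j + 1) - β = (n + 1) * T j := by
    intro j
    simp only [hTdef, pow_succ]
    field_simp
    ring
  have hp0 : ∀ y, 0 ≤ p 0 y := hp.1 0
  have hp1 : ∀ y, 0 ≤ p 1 y := hp.1 1
  have hbin : ∀ y, ∃ j : Fin K, T j * (p 0 y + p 1 y) ≤ infoTerm q0 q1 (p 0 y) (p 1 y) ∧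
      infoTerm q0 q1 (p 0 y) (p 1 y) ≤ T (j + 1) * (p 0 y + p 1 y) := by
    intro y
    have hg := infoTerm_nonneg h0 h1 hsum (hp0 y) (hp1 y)
    rcases (add_nonneg (hp0 y) (hp1 y)).eq_or_lt with h | h
    · have e0 : p 0 y = 0 := by linarith [hp0 y, hp1 y]
      have e1 : p 1 y = 0 := by linarith [hp0 y, hp1 y]
      obtain ⟨j, -⟩ := exists_bin (T := T) (v := D) (by simpa [hTdef] using hD0) K hK
      exact ⟨j, by simp [e0, e1, infoTerm]⟩
    · obtain ⟨j, hj1, hj2⟩ := exists_bin (T := T)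
        (v := infoTerm q0 q1 (p 0 y) (p 1 y) / (p 0 y + p 1 y))
        (by simp only [hTdef, pow_zero, sub_self, mul_zero]; exact div_nonneg hg h.le) K
        (lt_of_le_of_lt ((div_le_iff₀ h).2 (hD y)) hK)
      exact ⟨j, (le_div_iff₀ h).1 hj1, ((div_lt_iff₀ h).1 hj2).le⟩
  choose J hJ1 hJ2 using hbin
  let F : ℕ → Bool × Fin K := fun y => (decide (q1 * (p 0 y + p 1 y) ≤ p 1 y), J y)
  refine ⟨F, ?_⟩
  have hcell : ∀ i : Bool × Fin K, T i.2 * (∑' y, if F y = i then p 0 y + p 1 y else 0) ≤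
      cellInfo p F i := by
    rintro ⟨s, j⟩
    have e : (∑' y, if F y = (s, j) then p 0 y + p 1 y else 0) =
        (∑' y, if F y = (s, j) then p 0 y else 0) +
        (∑' y, if F y = (s, j) then p 1 y else 0) := by
      rw [← (summable_ite (hs 0) _).tsum_add (summable_ite (hs 1) _)]
      refine tsum_congr fun y => ?_
      split_ifs <;> simp
    rw [e]
    have ha : ∀ y, 0 ≤ if F y = (s, j) then p 0 y else 0 := by
      intro y; split_ifs; exacts [hp0 y, le_rfl]
    have hb : ∀ y, 0 ≤ if F y = (s, j) then p 1 y else 0 := by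
      intro y; split_ifs; exacts [hp1 y, le_rfl]
    have hT : ∀ y, T j * ((if F y = (s, j) then p 0 y else 0) +
        (if F y = (s, j) then p 1 y else 0)) ≤ infoTerm q0 q1
        (if F y = (s, j) then p 0 y else 0) (if F y = (s, j) then p 1 y else 0) := by
      intro y
      split_ifs with h
      · have : J y = j := congrArg Prod.snd h
        rw [← this]
        exact hJ1 y
      · simp [infoTerm]
    cases s with
    | true =>
      refine merge_right h0 h1 hsum ha hb (summable_ite (hs 0) _) (summable_ite (hs 1) _) ?_ hT
      intro y
      split_ifs with h
      · exact of_decide_eq_true (congrArg Prod.fst h)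
      · simp
    | false =>
      refine merge_left h0 h1 hsum ha hb (summable_ite (hs 0) _) (summable_ite (hs 1) _) ?_ hT
      intro y
      split_ifs with h
      · exact (not_le.1 (of_decide_eq_false (congrArg Prod.fst h))).le
      · simp
  have sw : Summable fun y => p 0 y + p 1 y := (hs 0).add (hs 1)
  have hfib := sum_tsum_fiber sw F (fun i => T i.2)
  refine le_trans ?_ (Finset.sum_le_sum fun i _ => hcell i)
  rw [hfib]
  have sT : Summable fun y => T (F y).2 * (p 0 y + p 1 y) := by
    have : Summable fun y => ∑ i : Bool × Fin K,
        T i.2 * (if F y = i then p 0 y + p 1 y else 0) :=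
      summable_sum fun i _ => (summable_ite sw _).mul_left _
    refine this.congr fun y => ?_
    simp
  have hpt : ∀ y, (n * infoTerm q0 q1 (p 0 y) (p 1 y) - β * (p 0 y + p 1 y)) / (n + 1) ≤
      T (F y).2 * (p 0 y + p 1 y) := by
    intro y
    rw [div_le_iff₀ (by positivity)]
    have e1 := mul_le_mul_of_nonneg_left (hJ2 y) hn'.le
    have e2 : (n * T (J y + 1) - β) * (p 0 y + p 1 y) = ((n + 1) * T (J y)) * (p 0 y + p 1 y) := by
      rw [hTstep]
    change _ ≤ T (J y) * _ * _
    linarith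
  have s1 : Summable fun y => n * infoTerm q0 q1 (p 0 y) (p 1 y) - β * (p 0 y + p 1 y) :=
    (sI.mul_left _).sub (sw.mul_left _)
  have htot : ∑' y, (n * infoTerm q0 q1 (p 0 y) (p 1 y) - β * (p 0 y + p 1 y)) / (n + 1) =
      (n * miBits p - β) / (n + 1) := by
    rw [tsum_div_const, (sI.mul_left _).tsum_sub (sw.mul_left _), tsum_mul_left, tsum_mul_left,
      (hs 0).tsum_add (hs 1), hsum, hI, mul_one]
  rw [← htot]
  exact Summable.tsum_le_tsum hpt (s1.div_const _) sT

lemma two_thirds_lt_log_two : (2 : ℝ) / 3 < Real.log 2 := by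
  have := Real.log_two_gt_d9
  norm_num at this ⊢
  linarith

/-- If the entropy of `Bern(q)` is at least `β`, then `q` cannot be too small: `h(q) ≤ 3 √q`. -/
lemma logb_inv_le {q q' β : ℝ} (hq : 0 < q) (hq' : 0 < q') (hsum : q + q' = 1) (hβ : 0 < β)
    (h : β ≤ q * Real.logb 2 (1 / q) + q' * Real.logb 2 (1 / q')) :
    Real.logb 2 (1 / q) ≤ 16 / β ^ 2 := by
  have hl := two_thirds_lt_log_two
  have hl0 : 0 < Real.log 2 := by linarith
  have hr : 0 < √q := Real.sqrt_pos.2 hq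
  have hrr : √q ^ 2 = q := Real.sq_sqrt hq.le
  have e1 : q * Real.log (1 / q) ≤ 2 * √q - 2 * q := by
    have h1 := Real.log_le_sub_one_of_pos (x := 1 / √q) (by positivity)
    have h2 : Real.log (1 / q) = 2 * Real.log (1 / √q) := by
      rw [← hrr, one_div, one_div, Real.log_inv, Real.log_inv, Real.log_pow, Real.sqrt_sq hr.le]
      push_cast; ring
    rw [h2]
    have h3 : q * (2 * Real.log (1 / √q)) ≤ q * (2 * (1 / √q - 1)) := by gcongr
    have h4 : q * (2 * (1 / √q - 1)) = 2 * √q - 2 * q := by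
      have : q * (1 / √q) = √q := by
        rw [mul_one_div, div_eq_iff hr.ne', ← sq, hrr]
      linear_combination 2 * this
    linarith
  have e2 : q' * Real.log (1 / q') ≤ q := by
    have h1 := Real.log_le_sub_one_of_pos (x := 1 / q') (by positivity)
    have h3 : q' * Real.log (1 / q') ≤ q' * (1 / q' - 1) := by gcongr
    have h4 : q' * (1 / q' - 1) = 1 - q' := by field_simp
    linarith
  have hent : β * Real.log 2 ≤ 2 * √q := by
    have : (q * Real.logb 2 (1 / q) + q' * Real.logb 2 (1 / q')) * Real.log 2 =
        q * Real.log (1 / q) + q' * Real.log (1 / q') := by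
      unfold Real.logb; field_simp
    have h' := mul_le_mul_of_nonneg_right h hl0.le
    rw [this] at h'
    linarith
  have hβq : β ≤ 3 * √q := by nlinarith
  have hβ2 : β ^ 2 ≤ 9 * q := by
    rw [← hrr]; nlinarith
  have h5 : Real.logb 2 (1 / q) ≤ (3 / 2) * (1 / q) := by
    unfold Real.logb
    rw [div_le_iff₀ hl0]
    have h1 := Real.log_le_sub_one_of_pos (x := 1 / q) (by positivity)
    have : 0 < 1 / q := by positivity
    nlinarith
  refine h5.trans ?_
  rw [mul_one_div, div_le_div_iff₀ hq (by positivity)]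
  nlinarith

/-- With `2 n A` cells, `A ≥ 8 max(log(1/β), 1)`, at least a fraction `1 - 2/(n+1)` of `β` bits
is kept. -/
lemma exists_good_cells {p : Fin 2 → ℕ → ℝ} (hp : IsJointPMF p) {β : ℝ} (hβ : 0 < β)
    (hI : β ≤ miBits p) {n A : ℕ} (hn : 0 < n)
    (hA : 8 * max (Real.logb 2 (1 / β)) 1 ≤ A) :
    ∃ F : ℕ → Bool × Fin (n * A), β * (1 - 2 / (n + 1)) ≤ ∑ i, cellInfo p F i := by
  obtain ⟨h0, h1⟩ := marginal_pos hp (hβ.trans_le hI)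
  obtain ⟨hs, hsum⟩ := isJointPMF_two hp
  obtain ⟨sI, hI'⟩ := miBits_nat hp h0 h1
  have hn' : (0 : ℝ) < n := by exact_mod_cast hn
  have hent : β ≤ (∑' y, p 0 y) * Real.logb 2 (1 / ∑' y, p 0 y) +
      (∑' y, p 1 y) * Real.logb 2 (1 / ∑' y, p 1 y) := by
    refine hI.trans ?_
    rw [hI', ← tsum_mul_right, ← tsum_mul_right,
      ← ((hs 0).mul_right _).tsum_add ((hs 1).mul_right _)]
    exact Summable.tsum_le_tsum (fun y => infoTerm_le h0 h1 (hp.1 0 y) (hp.1 1 y)) sI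
      (((hs 0).mul_right _).add ((hs 1).mul_right _))
  have d0 := logb_inv_le h0 h1 hsum hβ hent
  have d1 := logb_inv_le h1 h0 (by linarith) hβ (by linarith)
  obtain ⟨F, hF⟩ := exists_cells hp h0 h1 (D := 16 / β ^ 2) hβ (K := n * A) hn
    (fun y => by
      refine (infoTerm_le h0 h1 (hp.1 0 y) (hp.1 1 y)).trans ?_
      have e0 := mul_le_mul_of_nonneg_left d0 (hp.1 0 y)
      have e1 := mul_le_mul_of_nonneg_left d1 (hp.1 1 y)
      linarith) (by positivity) (by
      set L := max (Real.logb 2 (1 / β)) 1 with hL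
      set B := (2 : ℝ) ^ L with hB
      have hB1 : 1 / β ≤ B := by
        have : (2 : ℝ) ^ Real.logb 2 (1 / β) = 1 / β :=
          Real.rpow_logb (by norm_num) (by norm_num) (by positivity)
        rw [← this]
        exact Real.rpow_le_rpow_of_exponent_le (by norm_num) (le_max_left _ _)
      have hB2 : 2 ≤ B := by
        have := Real.rpow_le_rpow_of_exponent_le (x := 2) (by norm_num) (le_max_right (Real.logb 2 (1 / β)) 1)
        rwa [Real.rpow_one] at this
      have hpow : B ^ 8 ≤ (1 + 1 / (n : ℝ)) ^ (n * A) := by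
        have e1 : (2 : ℝ) ≤ (1 + 1 / (n : ℝ)) ^ n := by
          have := one_add_mul_le_pow (a := 1 / (n : ℝ)) (by
            have : 0 < 1 / (n : ℝ) := by positivity
            linarith) n
          have e : (n : ℝ) * (1 / n) = 1 := by field_simp
          rw [e] at this
          linarith
        calc B ^ 8 = (2 : ℝ) ^ (8 * L) := by
              rw [hB, ← Real.rpow_natCast, ← Real.rpow_mul (by norm_num), mul_comm]
              norm_num
          _ ≤ (2 : ℝ) ^ (A : ℝ) := Real.rpow_le_rpow_of_exponent_le (by norm_num) hA
          _ = (2 : ℝ) ^ A := Real.rpow_natCast _ _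
          _ ≤ ((1 + 1 / (n : ℝ)) ^ n) ^ A := by gcongr
          _ = _ := by rw [pow_mul]
      have h16 : 16 ≤ B ^ 4 := by
        have : (2 : ℝ) ^ 4 ≤ B ^ 4 := by gcongr
        linarith
      have h3 : (1 / β) ^ 3 ≤ B ^ 3 := by gcongr
      have h7 : 16 * (1 / β) ^ 3 ≤ B ^ 7 := by
        calc 16 * (1 / β) ^ 3 ≤ B ^ 4 * B ^ 3 := by gcongr
          _ = B ^ 7 := by ring
      have h8 : B ^ 7 + 128 ≤ B ^ 8 := by
        have : (2 : ℝ) ^ 7 ≤ B ^ 7 := by gcongr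
        have : B ^ 8 = B * B ^ 7 := by ring
        nlinarith
      have : 16 / β ^ 2 = β * (16 * (1 / β) ^ 3) := by field_simp
      rw [this]
      apply mul_lt_mul_of_pos_left _ hβ
      linarith)
  refine ⟨F, le_trans ?_ hF⟩
  rw [le_div_iff₀ (by positivity)]
  have : β * (1 - 2 / ((n : ℝ) + 1)) * (n + 1) = n * β - β := by field_simp; ring
  rw [this]
  nlinarith

lemma lower_bound {p : Fin 2 → ℕ → ℝ} (hp : IsJointPMF p) {β : ℝ} (hβ : 0 < β)
    (hI : β ≤ miBits p) {M : ℕ} (hM : 0 < M) :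
    β * fLower (((M : ℝ) - 1) / max (Real.logb 2 (1 / β)) 1) ≤ quantMI p M := by
  obtain ⟨h0, h1⟩ := marginal_pos hp (hβ.trans_le hI)
  obtain ⟨hs, hsum⟩ := isJointPMF_two hp
  set L := max (Real.logb 2 (1 / β)) 1 with hL
  have hL1 : 1 ≤ L := le_max_right _ _
  have hL0 : 0 < L := by linarith
  obtain ⟨k, rfl⟩ : ∃ k, M = k + 1 := ⟨M - 1, by omega⟩
  have hA : 8 * L ≤ (⌈8 * L⌉₊ : ℝ) := Nat.le_ceil _
  have hA' : (⌈8 * L⌉₊ : ℝ) ≤ 9 * L := by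
    have := Nat.ceil_lt_add_one (a := 8 * L) (by positivity)
    linarith
  set A := ⌈8 * L⌉₊
  have e : ((k + 1 : ℕ) : ℝ) - 1 = k := by push_cast; ring
  rw [e]
  have hcard : ∀ n : ℕ, (Finset.univ : Finset (Bool × Fin (n * A))).card = 2 * (n * A) := by
    intro n; simp
  unfold fLower
  split_ifs with ht
  · rw [div_lt_iff₀ hL0] at ht
    -- here `n = 3`, which keeps half of `β` with at most `54 L` cells
    obtain ⟨F, hF⟩ := exists_good_cells hp hβ hI (n := 3) (by norm_num) hA
    norm_num at hF
    have hc := hcard 3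
    rcases le_total (2 * (3 * A)) k with hk | hk
    · have := sum_cellInfo_le_quantMI hp h0 h1 F Finset.univ (M := k + 1) (by omega)
      refine le_trans ?_ (hF.trans this)
      apply mul_le_mul_of_nonneg_left _ hβ.le
      rw [div_div, div_le_iff₀ (by positivity)]
      linarith
    · obtain ⟨T, -, hTk, hT⟩ := exists_heavy_subset (cellInfo p F) Finset.univ k (by omega)
      have h2 := sum_cellInfo_le_quantMI hp h0 h1 F T (M := k + 1) (by omega)
      rw [hc] at hT
      push_cast at hT
      have hQ : 0 ≤ quantMI p (k + 1) := quantMI_nonneg hp _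
      have h3 : (k : ℝ) * (β * (1 / 2)) ≤ (54 * L) * quantMI p (k + 1) := by
        calc (k : ℝ) * (β * (1 / 2)) ≤ k * ∑ i, cellInfo p F i := by gcongr
          _ ≤ (2 * (3 * A)) * ∑ i ∈ T, cellInfo p F i := hT
          _ ≤ (2 * (3 * A)) * quantMI p (k + 1) := by gcongr
          _ ≤ _ := by
            apply mul_le_mul_of_nonneg_right _ hQ
            linarith
      have : β * (k / L / 208) = (k * (β * (1 / 2))) / (104 * L) := by field_simp; ring
      rw [this, div_le_iff₀ (by positivity)]
      have : 0 ≤ L * quantMI p (k + 1) := by positivity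
      linarith
  · push Not at ht
    set t := (k : ℝ) / L with htd
    have hkt : (k : ℝ) = t * L := by rw [htd]; field_simp
    have hn1 : t / 18 < ⌊t / 18⌋₊ + 1 := Nat.lt_floor_add_one _
    have hn2 : (⌊t / 18⌋₊ : ℝ) ≤ t / 18 := Nat.floor_le (by linarith)
    have hn3 : 0 < ⌊t / 18⌋₊ := Nat.floor_pos.2 (by linarith)
    set n := ⌊t / 18⌋₊
    obtain ⟨F, hF⟩ := exists_good_cells hp hβ hI (n := n) hn3 hA
    have hle : 2 * (n * A) ≤ k := by
      have : (2 * (n * A) : ℝ) ≤ k := by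
        calc (2 * (n * A) : ℝ) ≤ 2 * (t / 18 * (9 * L)) := by gcongr
          _ = k := by rw [hkt]; ring
      exact_mod_cast this
    have hc := hcard n
    have := sum_cellInfo_le_quantMI hp h0 h1 F Finset.univ (M := k + 1) (by omega)
    refine le_trans ?_ (hF.trans this)
    apply mul_le_mul_of_nonneg_left _ hβ.le
    have : 2 / ((n : ℝ) + 1) ≤ 52 / t := by
      rw [div_le_div_iff₀ (by positivity) (by linarith)]
      linarith
    linarith

/-! ### Information carried by a biased uniform bit -/

/-- `(1+s) log(1+s) + (1-s) log(1-s)`: up to the factor `1 / (2 log 2)`, the capacity in bits of a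
binary symmetric channel with bias `s`. -/
noncomputable def biasInfo (s : ℝ) : ℝ :=
  (1 + s) * Real.log (1 + s) + (1 - s) * Real.log (1 - s)

lemma biasInfo_neg (s : ℝ) : biasInfo (-s) = biasInfo s := by
  unfold biasInfo
  rw [← sub_eq_add_neg, sub_neg_eq_add]
  ring

lemma biasInfo_abs (s : ℝ) : biasInfo |s| = biasInfo s := by
  rcases abs_choice s with h | h <;> rw [h]
  exact biasInfo_neg s

lemma nonneg_of_hasDerivAt {f f' : ℝ → ℝ} {b : ℝ} (hb : 0 ≤ b)
    (h : ∀ x ∈ Set.Icc 0 b, HasDerivAt f (f' x) x) (hn : ∀ x ∈ Set.Icc 0 b, 0 ≤ f' x)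
    (h0 : f 0 = 0) : 0 ≤ f b := by
  have hm : MonotoneOn f (Set.Icc 0 b) := by
    refine monotoneOn_of_deriv_nonneg (convex_Icc 0 b)
      (fun x hx => (h x hx).continuousAt.continuousWithinAt) (fun x hx => ?_) (fun x hx => ?_)
    · rw [interior_Icc] at hx
      exact (h x (Set.Ioo_subset_Icc_self hx)).differentiableAt.differentiableWithinAt
    · rw [interior_Icc] at hx
      rw [(h x (Set.Ioo_subset_Icc_self hx)).deriv]
      exact hn x (Set.Ioo_subset_Icc_self hx)
  rw [← h0]
  exact hm ⟨le_rfl, hb⟩ ⟨hb, le_rfl⟩ hb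

lemma hasDerivAt_log_one_add {x : ℝ} (h : 0 < 1 + x) :
    HasDerivAt (fun x => Real.log (1 + x)) (1 / (1 + x)) x :=
  ((hasDerivAt_id x).const_add 1).log h.ne'

lemma hasDerivAt_log_one_sub {x : ℝ} (h : 0 < 1 - x) :
    HasDerivAt (fun x => Real.log (1 - x)) (-1 / (1 - x)) x :=
  ((hasDerivAt_id x).const_sub 1).log h.ne'

lemma hasDerivAt_biasInfo {x : ℝ} (h0 : 0 < 1 + x) (h1 : 0 < 1 - x) :
    HasDerivAt biasInfo (Real.log (1 + x) - Real.log (1 - x)) x := by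
  have d0 := ((hasDerivAt_id x).const_add 1).mul (hasDerivAt_log_one_add h0)
  have d1 := ((hasDerivAt_id x).const_sub 1).mul (hasDerivAt_log_one_sub h1)
  refine (d0.add d1).congr_deriv ?_
  simp only [id]
  field_simp
  ring

/-- The leading terms of the power series, with the `s⁶` coefficient enlarged to absorb the tail. -/
lemma biasInfo_le {s : ℝ} (hs : 0 ≤ s) (hs2 : s ^ 2 ≤ 1 / 5) :
    biasInfo s ≤ s ^ 2 + s ^ 4 / 6 + s ^ 6 / 10 := by
  have hlt : ∀ x ∈ Set.Icc 0 s, x ^ 2 ≤ 1 / 5 ∧ 0 < 1 + x ∧ 0 < 1 - x := by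
    intro x hx
    have : x ^ 2 ≤ s ^ 2 := by have := hx.1; have := hx.2; gcongr
    refine ⟨by linarith, by linarith [hx.1], by nlinarith⟩
  have step1 : ∀ x ∈ Set.Icc 0 s, 0 ≤ (2 * x + 2 * x ^ 3 / 3 + 3 * x ^ 5 / 5) -
      (Real.log (1 + x) - Real.log (1 - x)) := by
    intro b hb
    refine nonneg_of_hasDerivAt (f := fun x => (2 * x + 2 * x ^ 3 / 3 + 3 * x ^ 5 / 5) -
      (Real.log (1 + x) - Real.log (1 - x)))
      (f' := fun x => (2 + 2 * x ^ 2 + 3 * x ^ 4) - (1 / (1 + x) - -1 / (1 - x))) hb.1 ?_ ?_ ?_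
    · intro x hx
      obtain ⟨-, h0, h1⟩ := hlt x ⟨hx.1, hx.2.trans hb.2⟩
      refine HasDerivAt.sub ?_ ((hasDerivAt_log_one_add h0).sub (hasDerivAt_log_one_sub h1))
      have := (((hasDerivAt_id x).const_mul 2).add
        ((((hasDerivAt_id x).pow 3).const_mul 2).div_const 3)).add
        ((((hasDerivAt_id x).pow 5).const_mul 3).div_const 5)
      refine this.congr_deriv ?_
      simp only [id]
      norm_num
      ring
    · intro x hx
      obtain ⟨h5, h0, h1⟩ := hlt x ⟨hx.1, hx.2.trans hb.2⟩
      have : 1 / (1 + x) - -1 / (1 - x) = 2 / (1 - x ^ 2) := by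
        have : 1 - x ^ 2 = (1 + x) * (1 - x) := by ring
        rw [this]; field_simp; ring
      rw [this, sub_nonneg, div_le_iff₀ (by linarith)]
      have e : x ^ 4 = (x ^ 2) ^ 2 := by ring
      rw [e]
      nlinarith [mul_nonneg (sq_nonneg (x ^ 2)) (by linarith : 0 ≤ 1 - 3 * x ^ 2)]
    · simp
  have := nonneg_of_hasDerivAt (f := fun x => (x ^ 2 + x ^ 4 / 6 + x ^ 6 / 10) - biasInfo x)
      (f' := fun x => (2 * x + 2 * x ^ 3 / 3 + 3 * x ^ 5 / 5) -
      (Real.log (1 + x) - Real.log (1 - x))) hs (fun x hx => by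
        obtain ⟨-, h0, h1⟩ := hlt x hx
        refine HasDerivAt.sub ?_ (hasDerivAt_biasInfo h0 h1)
        have := ((((hasDerivAt_id x).pow 2)).add
          ((((hasDerivAt_id x).pow 4)).div_const 6)).add
          ((((hasDerivAt_id x).pow 6)).div_const 10)
        refine this.congr_deriv ?_
        simp only [id]
        norm_num
        ring) step1 (by simp [biasInfo])
  linarith

lemma sq_le_biasInfo {s : ℝ} (hs : 0 ≤ s) (hs1 : s < 1) : s ^ 2 ≤ biasInfo s := by
  have hlt : ∀ x ∈ Set.Icc 0 s, 0 < 1 + x ∧ 0 < 1 - x :=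
    fun x hx => ⟨by linarith [hx.1], by linarith [hx.2]⟩
  have step1 : ∀ x ∈ Set.Icc 0 s, 0 ≤ (Real.log (1 + x) - Real.log (1 - x)) - 2 * x := by
    intro b hb
    refine nonneg_of_hasDerivAt (f := fun x => (Real.log (1 + x) - Real.log (1 - x)) - 2 * x)
      (f' := fun x => (1 / (1 + x) - -1 / (1 - x)) - 2 * 1) hb.1 ?_ ?_ ?_
    · intro x hx
      obtain ⟨h0, h1⟩ := hlt x ⟨hx.1, hx.2.trans hb.2⟩
      exact ((hasDerivAt_log_one_add h0).sub (hasDerivAt_log_one_sub h1)).sub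
        ((hasDerivAt_id x).const_mul 2)
    · intro x hx
      obtain ⟨h0, h1⟩ := hlt x ⟨hx.1, hx.2.trans hb.2⟩
      have e : 1 - x ^ 2 = (1 + x) * (1 - x) := by ring
      have hp : 0 < 1 - x ^ 2 := by rw [e]; positivity
      have : 1 / (1 + x) - -1 / (1 - x) = 2 / (1 - x ^ 2) := by
        rw [e]; field_simp; ring
      rw [this, sub_nonneg, le_div_iff₀ hp]
      nlinarith [sq_nonneg x]
    · simp
  have := nonneg_of_hasDerivAt (f := fun x => biasInfo x - x ^ 2)
      (f' := fun x => (Real.log (1 + x) - Real.log (1 - x)) - 2 * x) hs (fun x hx => by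
        obtain ⟨h0, h1⟩ := hlt x hx
        refine (hasDerivAt_biasInfo h0 h1).sub ?_
        refine ((hasDerivAt_id x).pow 2).congr_deriv ?_
        simp) step1 (by simp [biasInfo])
  linarith

lemma infoTerm_half {w d : ℝ} (hw : 0 < w) :
    infoTerm (1 / 2) (1 / 2) ((w + d) / 2) ((w - d) / 2) =
      w * biasInfo (d / w) / (2 * Real.log 2) := by
  have hl : Real.log 2 ≠ 0 := (Real.log_pos (by norm_num)).ne'
  unfold infoTerm biasInfo Real.logb
  have e0 : (w + d) / 2 + (w - d) / 2 = w := by ring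
  have e1 : (w + d) / 2 / (1 / 2 * w) = 1 + d / w := by field_simp
  have e2 : (w - d) / 2 / (1 / 2 * w) = 1 - d / w := by field_simp
  rw [e0, e1, e2]
  field_simp

/-- For biases up to `1/√5` the information is at most `3/4` of the squared bias. -/
lemma infoTerm_half_le {w d : ℝ} (hw : 0 ≤ w) (hd : 5 * d ^ 2 ≤ w ^ 2) :
    infoTerm (1 / 2) (1 / 2) ((w + d) / 2) ((w - d) / 2) ≤ 3 / 4 * (d ^ 2 / w) := by
  rcases hw.eq_or_lt with rfl | hw
  · have : d = 0 := by nlinarith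
    simp [this, infoTerm]
  rw [infoTerm_half hw, ← biasInfo_abs]
  have hl : 0.6931 < Real.log 2 := by have := Real.log_two_gt_d9; norm_num at this ⊢; linarith
  have hs : |d / w| ^ 2 = d ^ 2 / w ^ 2 := by rw [sq_abs, div_pow]
  have hs5 : |d / w| ^ 2 ≤ 1 / 5 := by
    rw [hs, div_le_div_iff₀ (by positivity) (by norm_num)]; linarith
  have hb := biasInfo_le (abs_nonneg (d / w)) hs5
  have e : d ^ 2 / w = w * |d / w| ^ 2 := by rw [hs]; field_simp
  rw [e, div_le_iff₀ (by linarith)]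
  set s := |d / w| with hsd
  have h4 : s ^ 4 ≤ s ^ 2 * (1 / 5) := by nlinarith [sq_nonneg s]
  have h6 : s ^ 6 ≤ s ^ 2 * (1 / 25) := by
    have : s ^ 6 = s ^ 2 * s ^ 4 := by ring
    nlinarith [sq_nonneg s]
  have hb' : biasInfo s ≤ s ^ 2 * (3 / 2 * Real.log 2) := by
    nlinarith [sq_nonneg s]
  have := mul_le_mul_of_nonneg_left hb' hw.le
  linarith

lemma le_infoTerm_half {w d : ℝ} (hw : 0 ≤ w) (hd : 5 * d ^ 2 ≤ w ^ 2) :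
    (d ^ 2 / w) / (2 * Real.log 2) ≤ infoTerm (1 / 2) (1 / 2) ((w + d) / 2) ((w - d) / 2) := by
  rcases hw.eq_or_lt with rfl | hw
  · have : d = 0 := by nlinarith
    simp [this, infoTerm]
  rw [infoTerm_half hw, ← biasInfo_abs]
  have hl : 0 < Real.log 2 := Real.log_pos (by norm_num)
  have hs : |d / w| ^ 2 = d ^ 2 / w ^ 2 := by rw [sq_abs, div_pow]
  have hs5 : |d / w| ^ 2 ≤ 1 / 5 := by
    rw [hs, div_le_div_iff₀ (by positivity) (by norm_num)]; linarith
  have hb := sq_le_biasInfo (abs_nonneg (d / w)) (by nlinarith [abs_nonneg (d / w)])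
  have e : d ^ 2 / w = w * |d / w| ^ 2 := by rw [hs]; field_simp
  rw [e]
  gcongr

/-- The information carried by a symbol is at most its absolute bias (convexity). -/
lemma infoTerm_half_le_abs {w d : ℝ} (hd : |d| ≤ w) :
    infoTerm (1 / 2) (1 / 2) ((w + d) / 2) ((w - d) / 2) ≤ |d| := by
  have hw : 0 ≤ w := (abs_nonneg d).trans hd
  have hl : 0 < Real.log 2 := Real.log_pos (by norm_num)
  rcases hw.eq_or_lt with rfl | hw
  · have : d = 0 := by simpa using hd
    simp [this, infoTerm]
  rw [infoTerm_half hw, ← biasInfo_abs, abs_div, abs_of_pos hw]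
  set s := |d| / w with hs
  have hs0 : 0 ≤ s := by positivity
  have hs1 : s ≤ 1 := by rw [hs, div_le_one hw]; exact hd
  have e : |d| = w * s := by rw [hs]; field_simp
  have h1 : (1 + s) * Real.log (1 + s) ≤ s * (2 * Real.log 2) := by
    have := Real.convexOn_mul_log.2 (show (1 : ℝ) ∈ Set.Ici 0 by simp)
      (show (2 : ℝ) ∈ Set.Ici 0 by simp) (show 0 ≤ 1 - s by linarith) hs0 (by ring)
    simp only [smul_eq_mul, Real.log_one, mul_zero, zero_add] at this
    have e' : (1 - s) * 1 + s * 2 = 1 + s := by ring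
    rwa [e'] at this
  have h2 : (1 - s) * Real.log (1 - s) ≤ 0 :=
    mul_nonpos_of_nonneg_of_nonpos (by linarith) (Real.log_nonpos (by linarith) (by linarith))
  have hb : biasInfo s ≤ s * (2 * Real.log 2) := by unfold biasInfo; linarith
  rw [e, div_le_iff₀ (by positivity)]
  have := mul_le_mul_of_nonneg_left hb hw.le
  linarith

/-! ### Joint distributions with a uniform bit -/

/-- The joint pmf of a uniform bit `X` and of `Y`, where `Y = y` has probability `w y` and
`P(X=0,Y=y) - P(X=1,Y=y) = d y`. -/
noncomputable def biasedJoint (w d : ℕ → ℝ) : Fin 2 → ℕ → ℝ :=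
  fun x y => if x = 0 then (w y + d y) / 2 else (w y - d y) / 2

section biased

variable {w d : ℕ → ℝ}

lemma biasedJoint_tsum (hw : HasSum w 1) (hd : HasSum d 0) :
    (∑' y, biasedJoint w d 0 y = 1 / 2) ∧ (∑' y, biasedJoint w d 1 y = 1 / 2) := by
  constructor
  · simpa [biasedJoint] using ((hw.add hd).div_const 2).tsum_eq
  · simpa [biasedJoint] using ((hw.sub hd).div_const 2).tsum_eq

lemma biasedJoint_isJointPMF (hdw : ∀ y, |d y| ≤ w y) (hw : HasSum w 1) (hd : HasSum d 0) :
    IsJointPMF (biasedJoint w d) := by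
  have hn : ∀ x y, 0 ≤ biasedJoint w d x y := by
    intro x y
    have := abs_le.1 (hdw y)
    unfold biasedJoint
    split_ifs <;> linarith
  refine ⟨hn, ?_, ?_⟩
  · rw [summable_prod_of_nonneg (fun xy => hn xy.1 xy.2)]
    refine ⟨fun x => ?_, Summable.of_finite⟩
    by_cases hx : x = 0
    · simpa [biasedJoint, hx] using ((hw.add hd).div_const 2).summable
    · simpa [biasedJoint, hx] using ((hw.sub hd).div_const 2).summable
  · obtain ⟨h0, h1⟩ := biasedJoint_tsum hw hd
    rw [tsum_fintype, Fin.sum_univ_two, h0, h1]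
    norm_num

lemma biasedJoint_miBits (hdw : ∀ y, |d y| ≤ w y) (hw : HasSum w 1) (hd : HasSum d 0) :
    miBits (biasedJoint w d) =
      ∑' y, infoTerm (1 / 2) (1 / 2) ((w y + d y) / 2) ((w y - d y) / 2) := by
  obtain ⟨h0, h1⟩ := biasedJoint_tsum hw hd
  rw [(miBits_nat (biasedJoint_isJointPMF hdw hw hd) (by rw [h0]; norm_num)
    (by rw [h1]; norm_num)).2, h0, h1]
  simp [biasedJoint]

lemma biasedJoint_quantMI_le (hdw : ∀ y, |d y| ≤ w y) (hw : HasSum w 1) (hd : HasSum d 0)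
    {M : ℕ} (hM : 0 < M) {C : ℝ}
    (hC : ∀ f : ℕ → Fin M, ∑ m, infoTerm (1 / 2) (1 / 2)
      (((∑' y, if f y = m then w y else 0) + (∑' y, if f y = m then d y else 0)) / 2)
      (((∑' y, if f y = m then w y else 0) - (∑' y, if f y = m then d y else 0)) / 2) ≤ C) :
    quantMI (biasedJoint w d) M ≤ C := by
  have : Nonempty (Fin M) := ⟨⟨0, hM⟩⟩
  obtain ⟨h0, h1⟩ := biasedJoint_tsum hw hd
  obtain ⟨hs, -⟩ := isJointPMF_two (biasedJoint_isJointPMF hdw hw hd)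
  refine ciSup_le fun f => ?_
  rw [miBits_quantJoint hs, h0, h1]
  refine le_trans (Finset.sum_le_sum fun m _ => le_of_eq ?_) (hC f)
  have sw := summable_ite hw.summable (fun y => f y = m)
  have sd := summable_ite hd.summable (fun y => f y = m)
  congr 1
  · rw [← sw.tsum_add sd, ← tsum_div_const]
    refine tsum_congr fun y => ?_
    simp only [biasedJoint, if_true]
    split_ifs <;> simp
  · rw [← sw.tsum_sub sd, ← tsum_div_const]
    refine tsum_congr fun y => ?_
    simp only [biasedJoint]
    split_ifs <;> simp_all

end biased

/-- An erasure channel attains `I(X;Y) = β` exactly, and no quantizer gets more than `β`. -/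
lemma exists_erasure {β : ℝ} (hβ0 : 0 < β) (hβ1 : β ≤ 1) {M : ℕ} (hM : 0 < M) :
    ∃ p : Fin 2 → ℕ → ℝ, IsJointPMF p ∧ β ≤ miBits p ∧ quantMI p M ≤ β := by
  let w : ℕ → ℝ := fun y => if y = 0 then β / 2 else if y = 1 then β / 2 else
    if y = 2 then 1 - β else 0
  let d : ℕ → ℝ := fun y => if y = 0 then β / 2 else if y = 1 then -(β / 2) else 0
  have hsupp : ∀ g : ℕ → ℝ, (∀ y, 3 ≤ y → g y = 0) → HasSum g (g 0 + g 1 + g 2) := by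
    intro g hg
    have : HasSum g (∑ y ∈ Finset.range 3, g y) := hasSum_sum_of_ne_finset_zero (fun y hy => hg y (by simpa using hy))
    simpa [Finset.sum_range_succ] using this
  have hw0 : ∀ y, 3 ≤ y → w y = 0 := by
    intro y hy
    simp only [w]
    rw [if_neg (by omega), if_neg (by omega), if_neg (by omega)]
  have hd0 : ∀ y, 3 ≤ y → d y = 0 := by
    intro y hy
    simp only [d]
    rw [if_neg (by omega), if_neg (by omega)]
  have hw : HasSum w 1 := by
    convert hsupp w hw0 using 1
    simp [w]
  have hd : HasSum d 0 := by
    convert hsupp d hd0 using 1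
    simp [d]
  have hdw : ∀ y, |d y| ≤ w y := by
    intro y
    simp only [w, d]
    split_ifs
    · rw [abs_of_pos (by linarith)]
    · rw [abs_neg, abs_of_pos (by linarith)]
    · rw [abs_zero]; linarith
    · simp
  have habs : HasSum (fun y => |d y|) β := by
    convert hsupp (fun y => |d y|) (fun y hy => by simp [hd0 y hy]) using 1
    simp only [d]
    norm_num
    rw [abs_of_pos (by linarith)]
    ring
  refine ⟨biasedJoint w d, biasedJoint_isJointPMF hdw hw hd, ?_, ?_⟩
  · rw [biasedJoint_miBits hdw hw hd]
    have := hsupp (fun y => infoTerm (1 / 2) (1 / 2) ((w y + d y) / 2) ((w y - d y) / 2))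
      (fun y hy => by simp [hw0 y hy, hd0 y hy, infoTerm])
    rw [this.tsum_eq]
    have e1 : β / 2 / (2⁻¹ * (β / 2)) = 2 := by field_simp
    have e2 : (1 - β) / 2 * Real.logb 2 ((1 - β) / 2 / (2⁻¹ * (1 - β))) = 0 := by
      rcases eq_or_ne (1 - β) 0 with h | h
      · simp [h]
      · have : (1 - β) / 2 / (2⁻¹ * (1 - β)) = 1 := by field_simp
        rw [this, Real.logb_one, mul_zero]
    simp [infoTerm, w, d, e1, e2]
  · refine biasedJoint_quantMI_le hdw hw hd hM fun f => ?_
    have hfib := sum_tsum_fiber habs.summable f (fun _ => 1)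
    simp only [one_mul] at hfib
    rw [habs.tsum_eq] at hfib
    rw [← hfib]
    refine Finset.sum_le_sum fun m _ => ?_
    have sw := summable_ite hw.summable (fun y => f y = m)
    have sa := summable_ite habs.summable (fun y => f y = m)
    have hD : |∑' y, if f y = m then d y else 0| ≤ ∑' y, if f y = m then |d y| else 0 := by
      refine tsum_of_norm_bounded (f := fun y => if f y = m then d y else 0) sa.hasSum ?_
      intro y
      split_ifs <;> simp
    have hDW : (∑' y, if f y = m then |d y| else 0) ≤ ∑' y, if f y = m then w y else 0 := by
      refine Summable.tsum_le_tsum (fun y => ?_) sa sw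
      split_ifs
      exacts [hdw y, le_rfl]
    exact (infoTerm_half_le_abs (hD.trans hDW)).trans hD

/-! ### The extremal family -/

/-- Maximizing a sum whose terms change sign once, from `+` to `-`: an initial segment is best. -/
lemma sum_le_initial {w s : ℕ → ℝ} (hw : ∀ i, 0 ≤ w i) (hs : Antitone s) (K : ℕ) :
    ∃ k, ∀ B ⊆ Finset.range K,
      ∑ i ∈ B, s i * w i ≤ ∑ i ∈ Finset.range k, s i * w i := by
  induction K with
  | zero =>
    refine ⟨0, fun B hB => ?_⟩
    have : B = ∅ := by simpa using hB
    simp [this]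
  | succ K ih =>
    rcases le_total (s K) 0 with h | h
    · obtain ⟨k, hk⟩ := ih
      refine ⟨k, fun B hB => ?_⟩
      have hB' : B.erase K ⊆ Finset.range K := by
        intro i hi
        have h1 := Finset.mem_range.1 (hB (Finset.mem_of_mem_erase hi))
        have h2 := Finset.ne_of_mem_erase hi
        exact Finset.mem_range.2 (by omega)
      refine le_trans ?_ (hk _ hB')
      by_cases hK : K ∈ B
      · rw [← Finset.add_sum_erase B _ hK]
        have := mul_nonpos_of_nonpos_of_nonneg h (hw K)
        linarith
      · rw [Finset.erase_eq_of_notMem hK]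
    · refine ⟨K + 1, fun B hB => ?_⟩
      refine Finset.sum_le_sum_of_subset_of_nonneg hB fun i hi _ => ?_
      have : s K ≤ s i := hs (Nat.lt_succ_iff.1 (Finset.mem_range.1 hi))
      exact mul_nonneg (h.trans this) (hw i)

/-- If `w` is a pmf on `range K` and `s` is antitone with mean zero, the bound
`(∑ s w)² ≤ (∑ w) (1 - ∑ w)` extends from initial segments to all subsets. -/
lemma sq_sum_le {w s : ℕ → ℝ} (hw : ∀ i, 0 ≤ w i) (hs : Antitone s) {K : ℕ}
    (hw1 : ∑ i ∈ Finset.range K, w i = 1) (hs0 : ∑ i ∈ Finset.range K, s i * w i = 0)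
    (hwk : ∀ k, ∑ i ∈ Finset.range k, w i ≤ 1)
    (hinit : ∀ k, (∑ i ∈ Finset.range k, s i * w i) ^ 2 ≤
      (∑ i ∈ Finset.range k, w i) * (1 - ∑ i ∈ Finset.range k, w i))
    {B : Finset ℕ} (hB : B ⊆ Finset.range K) :
    (∑ i ∈ B, s i * w i) ^ 2 ≤ (∑ i ∈ B, w i) * (1 - ∑ i ∈ B, w i) := by
  -- for each `x ≥ 0` the linear functional `2 x E - (1 - x²) W` is at most `x²`
  have hlin : ∀ B ⊆ Finset.range K, ∀ x : ℝ, 0 ≤ x →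
      2 * x * ∑ i ∈ B, s i * w i - (1 - x ^ 2) * ∑ i ∈ B, w i ≤ x ^ 2 := by
    intro B hB x hx
    have hanti : Antitone fun i => 2 * x * s i - (1 - x ^ 2) := by
      intro i j hij
      have := mul_le_mul_of_nonneg_left (hs hij) (by positivity : 0 ≤ 2 * x)
      simp only
      linarith
    have hform : ∀ S : Finset ℕ, ∑ i ∈ S, (2 * x * s i - (1 - x ^ 2)) * w i =
        2 * x * ∑ i ∈ S, s i * w i - (1 - x ^ 2) * ∑ i ∈ S, w i := by
      intro S
      rw [Finset.mul_sum, Finset.mul_sum, ← Finset.sum_sub_distrib]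
      exact Finset.sum_congr rfl fun i _ => by ring
    obtain ⟨k, hk⟩ := sum_le_initial hw hanti K
    have h1 := hk B hB
    rw [hform, hform] at h1
    refine h1.trans ?_
    have h2 := hinit k
    have h3 := hwk k
    have h4 : 0 ≤ ∑ i ∈ Finset.range k, w i := Finset.sum_nonneg fun i _ => hw i
    set E := ∑ i ∈ Finset.range k, s i * w i
    set P := ∑ i ∈ Finset.range k, w i
    have h5 : 2 * x * E ≤ P + x ^ 2 * (1 - P) := by
      have h6 : 0 ≤ P + x ^ 2 * (1 - P) :=
        add_nonneg h4 (mul_nonneg (sq_nonneg x) (by linarith))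
      refine (abs_le_of_sq_le_sq' ?_ h6).2
      have := mul_le_mul_of_nonneg_left h2 (by positivity : 0 ≤ 4 * x ^ 2)
      nlinarith [sq_nonneg (P - x ^ 2 * (1 - P))]
    linarith
  have hpos : ∀ B ⊆ Finset.range K, 0 ≤ ∑ i ∈ B, s i * w i →
      (∑ i ∈ B, s i * w i) ^ 2 ≤ (∑ i ∈ B, w i) * (1 - ∑ i ∈ B, w i) := by
    intro B hB hE
    have h1 := hlin B hB
    have hW0 : 0 ≤ ∑ i ∈ B, w i := Finset.sum_nonneg fun i _ => hw i
    have hW1 : ∑ i ∈ B, w i ≤ 1 := by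
      rw [← hw1]
      exact Finset.sum_le_sum_of_subset_of_nonneg hB fun i _ _ => hw i
    set E := ∑ i ∈ B, s i * w i
    set W := ∑ i ∈ B, w i
    have := discrim_le_zero (a := 1 - W) (b := -2 * E) (c := W) (fun x => by
      rcases le_total 0 x with hx | hx
      · nlinarith [h1 x hx]
      · have e1 : 0 ≤ (1 - W) * (x * x) := mul_nonneg (by linarith) (mul_self_nonneg x)
        have e2 : x * E ≤ 0 := mul_nonpos_of_nonpos_of_nonneg hx hE
        linarith)
    unfold discrim at this
    nlinarith
  rcases le_total 0 (∑ i ∈ B, s i * w i) with h | h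
  · exact hpos B hB h
  · have h1 := hpos (Finset.range K \ B) Finset.sdiff_subset
    have e1 := Finset.sum_sdiff (f := w) hB
    have e2 := Finset.sum_sdiff (f := fun i => s i * w i) hB
    rw [hw1] at e1
    rw [hs0] at e2
    have e1' : ∑ i ∈ Finset.range K \ B, w i = 1 - ∑ i ∈ B, w i := by linarith
    have e2' : ∑ i ∈ Finset.range K \ B, s i * w i = -∑ i ∈ B, s i * w i := by linarith
    rw [e1', e2'] at h1
    have := h1 (by linarith)
    nlinarith

/-- The extremal joint distribution. The posterior bias, as a function of the quantile `P` of
`Y`, is a discretization of the derivative of `κ √(P (1-P))` at points with odds `P/(1-P)` in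
geometric progression from `ρ²` to `1/ρ²`, where `κ = ρ/√5`. -/
lemma exists_spread {ρ r : ℝ} {N : ℕ} (hρ : 0 < ρ) (hr : 1 < r) (hN : 0 < N)
    (hρr : ρ * r ^ N = 1 / ρ) :
    ∃ p : Fin 2 → ℕ → ℝ, IsJointPMF p ∧
      ρ ^ 2 / 5 * (N * ((r - 1) / (r + 1)) + 1) / (2 * Real.log 2) ≤ miBits p ∧
      ∀ M : ℕ, 0 < M → quantMI p M ≤ 3 / 4 * (ρ ^ 2 / 5) * ((M : ℝ) - 1) := by
  classical
  have hr0 : 0 < r := by linarith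
  let X : ℕ → ℝ := fun k => ρ * r ^ k
  have hX0 : X 0 = ρ := by simp [X]
  have hXN : X N = 1 / ρ := hρr
  have hXpos : ∀ k, 0 < X k := fun k => by simp only [X]; positivity
  have hXs : ∀ k, X (k + 1) = r * X k := fun k => by simp only [X, pow_succ]; ring
  have hXlt : ∀ k, X k < X (k + 1) := fun k => by
    rw [hXs]; have := hXpos k; nlinarith
  let P : ℕ → ℝ := fun k => if k = 0 then 0 else
    if k ≤ N + 1 then X (k - 1) ^ 2 / (1 + X (k - 1) ^ 2) else 1
  let E : ℕ → ℝ := fun k => if k = 0 then 0 else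
    if k ≤ N + 1 then X (k - 1) / (1 + X (k - 1) ^ 2) else 0
  let s : ℕ → ℝ := fun k => if k = 0 then 1 / ρ else
    if k ≤ N then (1 - X (k - 1) * X k) / (X (k - 1) + X k) else -(1 / ρ)
  have hP0 : P 0 = 0 := by simp [P]
  have hE0 : E 0 = 0 := by simp [E]
  have hPm : ∀ k, k ≤ N → P (k + 1) = X k ^ 2 / (1 + X k ^ 2) := by
    intro k hk
    simp only [P]
    rw [if_neg (by omega), if_pos (by omega), Nat.add_sub_cancel]
  have hEm : ∀ k, k ≤ N → E (k + 1) = X k / (1 + X k ^ 2) := by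
    intro k hk
    simp only [E]
    rw [if_neg (by omega), if_pos (by omega), Nat.add_sub_cancel]
  have hPe : ∀ k, N + 2 ≤ k → P k = 1 := by
    intro k hk
    simp only [P]
    rw [if_neg (by omega), if_neg (by omega)]
  have hEe : ∀ k, N + 2 ≤ k → E k = 0 := by
    intro k hk
    simp only [E]
    rw [if_neg (by omega), if_neg (by omega)]
  have hs0 : s 0 = 1 / ρ := by simp [s]
  have hsm : ∀ k, k < N → s (k + 1) = (1 - X k * X (k + 1)) / (X k + X (k + 1)) := by
    intro k hk
    simp only [s]
    rw [if_neg (by omega), if_pos (by omega), Nat.add_sub_cancel]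
  have hse : ∀ k, N + 1 ≤ k → s k = -(1 / ρ) := by
    intro k hk
    simp only [s]
    rw [if_neg (by omega), if_neg (by omega)]
  let w : ℕ → ℝ := fun k => P (k + 1) - P k
  -- the four kinds of atoms
  have hcases : ∀ k, k = 0 ∨ (∃ j, j < N ∧ k = j + 1) ∨ k = N + 1 ∨ N + 2 ≤ k := by
    intro k
    rcases Nat.eq_zero_or_pos k with h | h
    · exact Or.inl h
    · rcases le_or_gt k N with h' | h'
      · exact Or.inr (Or.inl ⟨k - 1, by omega, by omega⟩)
      · omega
  have hw_0 : w 0 = ρ ^ 2 / (1 + ρ ^ 2) := by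
    simp only [w]; rw [hPm 0 (by omega), hP0, hX0, sub_zero]
  have hw_m : ∀ j, j < N → w (j + 1) = (X (j + 1) ^ 2 - X j ^ 2) /
      ((1 + X j ^ 2) * (1 + X (j + 1) ^ 2)) := by
    intro j hj
    simp only [w]; rw [hPm (j + 1) (by omega), hPm j (by omega)]
    have := hXpos j
    have := hXpos (j + 1)
    field_simp
    ring
  have hw_e : w (N + 1) = ρ ^ 2 / (1 + ρ ^ 2) := by
    simp only [w]; rw [hPe (N + 1 + 1) (by omega), hPm N le_rfl, hXN]
    field_simp
    ring
  have hw_z : ∀ k, N + 2 ≤ k → w k = 0 := by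
    intro k hk
    simp only [w]; rw [hPe _ hk, hPe _ (by omega), sub_self]
  have hw : ∀ k, 0 ≤ w k := by
    intro k
    rcases hcases k with rfl | ⟨j, hj, rfl⟩ | rfl | h
    · rw [hw_0]; positivity
    · rw [hw_m j hj]
      have h1 := hXlt j
      have h2 := hXpos j
      apply div_nonneg _ (by positivity)
      nlinarith
    · rw [hw_e]; positivity
    · rw [hw_z k h]
  have hEd : ∀ k, E (k + 1) - E k = s k * w k := by
    intro k
    rcases hcases k with rfl | ⟨j, hj, rfl⟩ | rfl | h
    · rw [hEm 0 (by omega), hE0, hX0, hs0, hw_0]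
      field_simp
      ring
    · rw [hEm (j + 1) (by omega), hEm j (by omega), hsm j hj, hw_m j hj]
      have := hXpos j
      have := hXpos (j + 1)
      field_simp
      ring
    · rw [hEe (N + 1 + 1) (by omega), hEm N le_rfl, hse (N + 1) le_rfl, hw_e, hXN]
      field_simp
      ring
    · rw [hEe _ h, hEe _ (by omega), hw_z k h]
      ring
  have hsq : ∀ j, j < N → s (j + 1) ^ 2 * w (j + 1) = (r - 1) / (r + 1) - w (j + 1) := by
    intro j hj
    rw [hsm j hj, hw_m j hj, hXs]
    have := hXpos j
    field_simp
    ring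
  have hanti : Antitone s := by
    refine antitone_nat_of_succ_le fun k => ?_
    rcases hcases k with rfl | ⟨j, hj, rfl⟩ | rfl | h
    · rw [hs0, hsm 0 hN, hX0]
      have := hXpos (0 + 1)
      rw [div_le_div_iff₀ (by positivity) hρ]
      nlinarith [mul_pos hρ hρ, mul_pos (mul_pos hρ hρ) this]
    · have h1 := hXpos j
      have h2 := hXpos (j + 1)
      rcases Nat.lt_or_ge (j + 1) N with h | h
      · rw [hsm j hj, hsm (j + 1) h]
        have h3 := hXpos (j + 1 + 1)
        have h4 : X j < X (j + 1 + 1) := (hXlt j).trans (hXlt (j + 1))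
        rw [div_le_div_iff₀ (by positivity) (by positivity)]
        nlinarith [mul_pos (mul_pos h2 h2) (sub_pos.2 h4)]
      · have hjN : j + 1 = N := by omega
        rw [hsm j hj, hse (j + 1 + 1) (by omega), ← hXN, ← hjN, le_div_iff₀ (by positivity)]
        nlinarith
    · rw [hse _ le_rfl, hse _ (by omega)]
    · rw [hse k (by omega), hse (k + 1) (by omega)]
  have habs : ∀ k, |s k| ≤ 1 / ρ := by
    intro k
    rw [abs_le]
    constructor
    · rw [← hse (max k (N + 1)) (le_max_right _ _)]
      exact hanti (le_max_left _ _)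
    · rw [← hs0]
      exact hanti (Nat.zero_le k)
  have hsumw : ∀ k, ∑ i ∈ Finset.range k, w i = P k := by
    intro k
    rw [Finset.sum_range_sub, hP0, sub_zero]
  have hsumE : ∀ k, ∑ i ∈ Finset.range k, s i * w i = E k := by
    intro k
    simp_rw [← hEd]
    rw [Finset.sum_range_sub, hE0, sub_zero]
  have hPE : ∀ k, P k ≤ 1 ∧ E k ^ 2 ≤ P k * (1 - P k) := by
    intro k
    rcases Nat.eq_zero_or_pos k with rfl | hk
    · rw [hP0, hE0]; norm_num
    · rcases le_or_gt k (N + 1) with h' | h'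
      · obtain ⟨j, rfl⟩ : ∃ j, k = j + 1 := ⟨k - 1, by omega⟩
        rw [hPm j (by omega), hEm j (by omega)]
        have := hXpos j
        refine ⟨?_, le_of_eq ?_⟩
        · rw [div_le_one (by positivity)]; linarith
        · field_simp
          ring
      · rw [hPe k (by omega), hEe k (by omega)]; norm_num
  have hw1 : ∑ i ∈ Finset.range (N + 2), w i = 1 := by rw [hsumw, hPe _ le_rfl]
  have hE1 : ∑ i ∈ Finset.range (N + 2), s i * w i = 0 := by rw [hsumE, hEe _ le_rfl]
  have hsub : ∀ B ⊆ Finset.range (N + 2),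
      (∑ i ∈ B, s i * w i) ^ 2 ≤ (∑ i ∈ B, w i) * (1 - ∑ i ∈ B, w i) := fun B hB =>
    sq_sum_le hw hanti hw1 hE1 (fun k => by rw [hsumw]; exact (hPE k).1)
      (fun k => by rw [hsumw, hsumE]; exact (hPE k).2) hB
  have h5 : (0 : ℝ) < √5 := by positivity
  have h55 : √5 ^ 2 = (5 : ℝ) := Real.sq_sqrt (by norm_num)
  let κ : ℝ := ρ / √5
  have hκ : κ ^ 2 = ρ ^ 2 / 5 := by simp only [κ]; rw [div_pow, h55]
  have hκ0 : 0 < κ := by simp only [κ]; positivity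
  let d : ℕ → ℝ := fun k => κ * (s k * w k)
  have hdw' : ∀ k, √5 * |d k| ≤ w k := by
    intro k
    have e : √5 * |d k| = ρ * |s k| * w k := by
      simp only [d, κ]
      rw [abs_mul, abs_mul, abs_of_nonneg (hw k), abs_of_pos (by positivity)]
      field_simp
    rw [e]
    have : ρ * |s k| ≤ 1 := by
      have := mul_le_mul_of_nonneg_left (habs k) hρ.le
      rwa [mul_one_div_cancel hρ.ne'] at this
    exact mul_le_of_le_one_left (hw k) this
  have h51 : 1 ≤ √(5 : ℝ) := by rw [Real.one_le_sqrt]; norm_num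
  have hdw : ∀ k, |d k| ≤ w k := fun k =>
    le_trans (le_mul_of_one_le_left (abs_nonneg _) h51) (hdw' k)
  have hzw : ∀ k ∉ Finset.range (N + 2), w k = 0 := fun k hk => hw_z k (by simpa using hk)
  have hzd : ∀ k ∉ Finset.range (N + 2), d k = 0 := fun k hk => by
    simp only [d]; rw [hzw k hk]; ring
  have hWs : HasSum w 1 := by
    rw [← hw1]; exact hasSum_sum_of_ne_finset_zero hzw
  have hDs : HasSum d 0 := by
    have : ∑ i ∈ Finset.range (N + 2), d i = 0 := by
      simp only [d]
      rw [← Finset.mul_sum, hE1, mul_zero]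
    rw [← this]; exact hasSum_sum_of_ne_finset_zero hzd
  refine ⟨biasedJoint w d, biasedJoint_isJointPMF hdw hWs hDs, ?_, ?_⟩
  · rw [biasedJoint_miBits hdw hWs hDs, tsum_eq_sum (s := Finset.range (N + 2))
      (fun k hk => by simp [hzw k hk, hzd k hk, infoTerm])]
    have hlow : ∀ k, κ ^ 2 * (s k ^ 2 * w k) / (2 * Real.log 2) ≤
        infoTerm (1 / 2) (1 / 2) ((w k + d k) / 2) ((w k - d k) / 2) := by
      intro k
      have h2 : 5 * d k ^ 2 ≤ w k ^ 2 := by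
        have := pow_le_pow_left₀ (by positivity) (hdw' k) 2
        rwa [mul_pow, h55, sq_abs] at this
      have := le_infoTerm_half (hw k) h2
      have e : d k ^ 2 / w k = κ ^ 2 * (s k ^ 2 * w k) := by
        simp only [d]
        rcases (hw k).eq_or_lt with h | h
        · rw [← h]; simp
        · field_simp
      rwa [e] at this
    refine le_trans (le_of_eq ?_) (Finset.sum_le_sum fun k _ => hlow k)
    rw [← Finset.sum_div, ← Finset.mul_sum, hκ]
    congr 2
    have hsum1 := hw1
    rw [Finset.sum_range_succ, Finset.sum_range_succ'] at hsum1 ⊢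
    rw [Finset.sum_congr rfl (fun j hj => hsq j (Finset.mem_range.1 hj)),
      Finset.sum_sub_distrib, Finset.sum_const, Finset.card_range, nsmul_eq_mul]
    have q0 : s 0 ^ 2 * w 0 = 1 - w 0 := by
      rw [hs0, hw_0]; field_simp; ring
    have q1 : s (N + 1) ^ 2 * w (N + 1) = 1 - w (N + 1) := by
      rw [hse _ le_rfl, hw_e]; field_simp; ring
    rw [q0, q1]
    linarith
  · intro M hM
    refine biasedJoint_quantMI_le hdw hWs hDs hM fun f => ?_
    have hcell : ∀ m, infoTerm (1 / 2) (1 / 2)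
        (((∑' y, if f y = m then w y else 0) + (∑' y, if f y = m then d y else 0)) / 2)
        (((∑' y, if f y = m then w y else 0) - (∑' y, if f y = m then d y else 0)) / 2) ≤
        3 / 4 * (ρ ^ 2 / 5) * (1 - ∑' y, if f y = m then w y else 0) := by
      intro m
      have e : ∀ g : ℕ → ℝ, (∀ k ∉ Finset.range (N + 2), g k = 0) →
          (∑' y, if f y = m then g y else 0) =
          ∑ y ∈ (Finset.range (N + 2)).filter (fun y => f y = m), g y := by
        intro g hg
        rw [tsum_eq_sum (s := Finset.range (N + 2)) (fun k hk => by simp [hg k hk]),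
          Finset.sum_filter]
      rw [e w hzw, e d hzd]
      set B := (Finset.range (N + 2)).filter (fun y => f y = m)
      have hB := hsub B (Finset.filter_subset _ _)
      have hW0 : 0 ≤ ∑ i ∈ B, w i := Finset.sum_nonneg fun i _ => hw i
      have hDE : ∑ i ∈ B, d i = κ * ∑ i ∈ B, s i * w i := by
        simp only [d]; rw [Finset.mul_sum]
      have hD5 : √5 * |∑ i ∈ B, d i| ≤ ∑ i ∈ B, w i := by
        calc √5 * |∑ i ∈ B, d i| ≤ √5 * ∑ i ∈ B, |d i| := by
              gcongr; exact Finset.abs_sum_le_sum_abs _ _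
          _ = ∑ i ∈ B, √5 * |d i| := Finset.mul_sum _ _ _
          _ ≤ _ := Finset.sum_le_sum fun i _ => hdw' i
      have h2 : 5 * (∑ i ∈ B, d i) ^ 2 ≤ (∑ i ∈ B, w i) ^ 2 := by
        have := pow_le_pow_left₀ (by positivity) hD5 2
        rwa [mul_pow, h55, sq_abs] at this
      have hW1 : ∑ i ∈ B, w i ≤ 1 := by
        rw [← hw1]
        exact Finset.sum_le_sum_of_subset_of_nonneg (Finset.filter_subset _ _) fun i _ _ => hw i
      refine (infoTerm_half_le hW0 h2).trans ?_
      rw [mul_assoc]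
      apply mul_le_mul_of_nonneg_left _ (by norm_num)
      rcases hW0.eq_or_lt with h | h
      · rw [← h]; simp; positivity
      · rw [div_le_iff₀ h, hDE, mul_pow, hκ]
        have := mul_le_mul_of_nonneg_left hB (by positivity : 0 ≤ ρ ^ 2 / 5)
        linarith
    refine (Finset.sum_le_sum fun m _ => hcell m).trans_eq ?_
    have hfib := sum_tsum_fiber hWs.summable f (fun _ => 1)
    simp only [one_mul] at hfib
    rw [hWs.tsum_eq] at hfib
    rw [← Finset.mul_sum, Finset.sum_sub_distrib, hfib]
    simp

/-! ### Upper bound -/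

/-- For `log(1/β) > 3` the extremal family, with odds truncated at `20 β / log(1/β)`, contains a joint
distribution with `I(X;Y) ≥ β` and `I(X;[Y]_M) ≤ 3 β (M - 1) / log(1/β)`. -/
lemma exists_hard {β : ℝ} (hβ : 0 < β) (hℓ : 3 < Real.logb 2 (1 / β)) {M : ℕ} (hM : 0 < M) :
    ∃ p : Fin 2 → ℕ → ℝ, IsJointPMF p ∧ β ≤ miBits p ∧
      quantMI p M ≤ β * (3 * (((M : ℝ) - 1) / Real.logb 2 (1 / β))) := by
  set ℓ := Real.logb 2 (1 / β) with hℓd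
  have hℓ0 : 0 < ℓ := by linarith
  have hl : 0 < Real.log 2 := Real.log_pos (by norm_num)
  have hlogβ : Real.log (1 / β) = ℓ * Real.log 2 := by
    rw [hℓd, Real.logb, div_mul_cancel₀ _ hl.ne']
  have hβ8 : β < 1 / 8 := by
    have h1 : (2 : ℝ) ^ (3 : ℝ) < (2 : ℝ) ^ ℓ := Real.rpow_lt_rpow_of_exponent_lt (by norm_num) hℓ
    rw [hℓd, Real.rpow_logb (by norm_num) (by norm_num) (by positivity), lt_div_iff₀ hβ] at h1
    norm_num at h1
    linarith
  -- `o` is the smallest odds of the construction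
  set o : ℝ := 20 * β / ℓ with ho
  have ho0 : 0 < o := by positivity
  have ho1 : o < 1 := by rw [ho, div_lt_one hℓ0]; linarith
  set Z := Real.log (1 / o) with hZ
  have hZ0 : 0 < Z := Real.log_pos (by rw [lt_div_iff₀ ho0]; linarith)
  have hZeq : Z = ℓ * Real.log 2 + Real.log (ℓ / 20) := by
    rw [hZ, ← hlogβ, ← Real.log_mul (by positivity) (by positivity), ho]
    congr 1
    field_simp
  have hgap : 0 < 2 + Real.log (ℓ / 20) := by
    have h1 : Real.log (3 / 20) < Real.log (ℓ / 20) :=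
      Real.log_lt_log (by norm_num) (by linarith)
    have h2 : -2 < Real.log (3 / 20) := by
      rw [Real.lt_log_iff_exp_lt (by norm_num)]
      have h3 := Real.exp_one_gt_d9
      have h4 : Real.exp (-2) = 1 / (Real.exp 1 * Real.exp 1) := by
        rw [← Real.exp_add, one_div, ← Real.exp_neg]; norm_num
      rw [h4, div_lt_div_iff₀ (by positivity) (by norm_num)]
      nlinarith
    linarith
  set η := 2 + Real.log (ℓ / 20) with hη
  obtain ⟨N, hN⟩ := exists_nat_gt (Z ^ 2 / (2 * η))
  have hN0 : (0 : ℝ) < N := lt_of_le_of_lt (by positivity) hN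
  rw [div_lt_iff₀ (by positivity)] at hN
  set y := Z / N with hy
  have hy0 : 0 < y := by positivity
  set r := Real.exp y with hr
  have hr1 : 1 + y ≤ r := by have := Real.add_one_le_exp y; linarith
  have hρ : 0 < √o := Real.sqrt_pos.2 ho0
  have hρ2 : √o ^ 2 = o := Real.sq_sqrt ho0.le
  have hρr : √o * r ^ N = 1 / √o := by
    have : r ^ N = 1 / o := by
      rw [hr, ← Real.exp_nat_mul, hy, mul_div_cancel₀ _ hN0.ne', hZ, Real.exp_log (by positivity)]
    rw [this, eq_div_iff hρ.ne']
    calc √o * (1 / o) * √o = √o ^ 2 * (1 / o) := by ring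
      _ = 1 := by rw [hρ2]; field_simp
  obtain ⟨p, hp, hI, hQ⟩ := exists_spread hρ (by linarith : 1 < r) (by exact_mod_cast hN0) hρr
  rw [hρ2] at hI hQ
  refine ⟨p, hp, le_trans ?_ hI, (hQ M hM).trans_eq ?_⟩
  · have h1 : y / (y + 2) ≤ (r - 1) / (r + 1) := by
      rw [div_le_div_iff₀ (by linarith) (by linarith)]
      nlinarith
    have h2 : Z / 2 - Z ^ 2 / (4 * N) ≤ N * (y / (y + 2)) := by
      have e : (N : ℝ) * (y / (y + 2)) = N * y / (y + 2) := by ring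
      have e2 : (N : ℝ) * y = Z := by rw [hy]; field_simp
      have e3 : Z ^ 2 / (4 * N) = Z * y / 4 := by rw [hy]; field_simp
      rw [e, e2, e3, le_div_iff₀ (by linarith)]
      nlinarith [mul_pos hZ0 (mul_pos hy0 hy0)]
    have h3 : Z ^ 2 / (4 * N) ≤ η / 2 := by
      rw [div_le_div_iff₀ (by positivity) (by norm_num)]
      linarith
    have h4 : (N : ℝ) * (y / (y + 2)) ≤ N * ((r - 1) / (r + 1)) := by gcongr
    have h5 : ℓ * Real.log 2 / 2 ≤ N * ((r - 1) / (r + 1)) + 1 := by linarith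
    rw [le_div_iff₀ (by positivity)]
    have h6 := mul_le_mul_of_nonneg_left h5 (by positivity : 0 ≤ o / 5)
    refine le_trans (le_of_eq ?_) h6
    rw [ho]
    field_simp
    norm_num
  · rw [ho]
    field_simp
    norm_num

lemma ID_le {p : Fin 2 → ℕ → ℝ} {M : ℕ} {β v : ℝ} (hp : IsJointPMF p) (hI : β ≤ miBits p)
    (hv : quantMI p M ≤ v) : ID M 2 β ≤ v := by
  refine le_trans (csInf_le ⟨0, ?_⟩ ⟨p, hp, hI, rfl⟩) hv
  rintro _ ⟨p', hp', -, rfl⟩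
  exact quantMI_nonneg hp' M

/-- Theorem 1: characterization of the binary information distillation function. -/
theorem binary_information_distillation (β : ℝ) (hβ0 : 0 < β) (hβ1 : β ≤ 1)
    (M : ℕ) (hM : 0 < M) :
    β * fLower (((M : ℝ) - 1) / max (Real.logb 2 (1 / β)) 1) ≤ ID M 2 β ∧
    ID M 2 β ≤ β * fUpper (((M : ℝ) - 1) / max (Real.logb 2 (1 / β)) 1) := by
  obtain ⟨p0, hp0, hI0, hQ0⟩ := exists_erasure hβ0 hβ1 hM
  constructor
  · refine le_csInf ⟨_, p0, hp0, hI0, rfl⟩ ?_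
    rintro _ ⟨p, hp, hI, rfl⟩
    exact lower_bound hp hβ0 hI hM
  · unfold fUpper
    set L := max (Real.logb 2 (1 / β)) 1 with hL
    have hL1 : 1 ≤ L := le_max_right _ _
    have hL0 : 0 < L := by linarith
    have hM1 : (1 : ℝ) ≤ M := by exact_mod_cast hM
    rcases le_or_gt 1 (3 * (((M : ℝ) - 1) / L)) with h | h
    · rw [min_eq_right h, mul_one]
      exact ID_le hp0 hI0 hQ0
    · rw [min_eq_left h.le]
      rcases Nat.lt_or_ge 1 M with hM2 | hM2
      · have hM2' : (2 : ℝ) ≤ M := by exact_mod_cast hM2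
        -- `3 (M - 1) < L` with `M ≥ 2` forces `L = log (1 / β) > 3`
        have h3 : 3 * ((M : ℝ) - 1) < L := by
          rwa [← mul_div_assoc, div_lt_one hL0] at h
        have hLeq : L = Real.logb 2 (1 / β) := by
          rcases max_choice (Real.logb 2 (1 / β)) 1 with h' | h'
          · exact h'
          · rw [← hL] at h'; linarith
        rw [hLeq] at h3 ⊢
        obtain ⟨p, hp, hI, hQ⟩ := exists_hard hβ0 (by linarith) hM
        exact ID_le hp hI hQ
      · obtain rfl : M = 1 := by omega
        refine ID_le hp0 hI0 (le_of_eq ?_)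
        -- a single cell contains everything and carries no information
        obtain ⟨h0, h1⟩ := marginal_pos hp0 (hβ0.trans_le hI0)
        obtain ⟨hs, hsum⟩ := isJointPMF_two hp0
        have hconst : ∀ f : ℕ → Fin 1, miBits (quantJoint p0 f) = 0 := by
          intro f
          rw [miBits_quantJoint hs]
          have e : ∀ x, quantJoint p0 f x 0 = ∑' y, p0 x y := by
            intro x
            rw [← sum_quantJoint x (hs x) f]
            simp
          simp [e, infoTerm, hsum, h0.ne', h1.ne']
        simp [quantMI, hconst]
end

section
/- For any β > 0 and any ε > 0, there exist two probability distributions P and Q on the natural numbers, with P absolutely continuous with respect to Q, such that D(P‖Q) = β and, for every positive integer M, ψ_M(P,Q) ≤ M · ε. -/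
/-!
If the log-likelihood ratio `s` (in bits) has tail `P (s ≥ t) ≈ δ / t`, then a single cell of a
quantizer contributes only `O(δ)` to the divergence, while the total divergence `E s` diverges
logarithmically in the truncation level. Concretely, for `i < N` let `P i = δ 2⁻ⁱ` and
`Q i = P i · 2^(-2ⁱ)`, and put the remaining mass of both laws on the point `N`.
Each `i < N` contributes exactly `δ` to `D(P‖Q)`, so the divergence is `N δ` up to a
small negative term from the point `N`.

* A cell containing `N` contributes at most `ε`, because `Q N ≥ P N ≥ 2^(-ε)` for small `δ`.
* A cell with least element `i < N` has `P`-mass at most `2 P i` and `Q`-mass at least `Q i`, so it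
  contributes at most `2 δ 2⁻ⁱ (1 + 2ⁱ) ≤ 4 δ ≤ ε` (`cell_bound`).

With `N` large, the divergence is a continuous function of `δ` which vanishes at `δ = 0` and exceeds
`β` at the largest admissible `δ`; the intermediate value theorem gives exactly `β`.
-/

open scoped BigOperators

/-- KL divergence (in bits) between pmfs `P` and `Q`, with conventions `0 log(0/q) = 0`. -/
noncomputable def klBits {𝒴 : Type*} (P Q : 𝒴 → ℝ) : ℝ :=
  ∑' y, P y * Real.logb 2 (P y / Q y)

/-- `P` is a pmf on `𝒴`. -/
def IsPMF {𝒴 : Type*} (P : 𝒴 → ℝ) : Prop :=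
  (∀ y, 0 ≤ P y) ∧ Summable P ∧ (∑' y, P y) = 1

/-- Pushforward pmf of `P` under `f`. -/
noncomputable def pushPMF {𝒴 : Type*} {M : ℕ} (P : 𝒴 → ℝ) (f : 𝒴 → Fin M) : Fin M → ℝ :=
  fun m => ∑' y, if f y = m then P y else 0

/-- Relative weight of the point `i` under `P`. -/
noncomputable def wP (i : ℕ) : ℝ := (1 / 2) ^ i

/-- Relative weight of the point `i` under `Q`: the likelihood ratio at `i` is `2 ^ 2 ^ i`. -/
noncomputable def wQ (i : ℕ) : ℝ := (1 / 2) ^ i * (1 / 2) ^ (2 ^ i)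

/-- Mass `δ * w i` at each `i < N`, the remaining mass at `N`, and zero beyond. -/
noncomputable def capped (w : ℕ → ℝ) (N : ℕ) (δ : ℝ) (y : ℕ) : ℝ :=
  if y < N then δ * w y else if y = N then 1 - δ * ∑ i ∈ Finset.range N, w i else 0

/-- The divergence of the constructed pair as a function of `δ`. -/
noncomputable def divFun (N : ℕ) (δ : ℝ) : ℝ :=
  N * δ + (1 - δ * ∑ i ∈ Finset.range N, wP i) *
    Real.logb 2 ((1 - δ * ∑ i ∈ Finset.range N, wP i) / (1 - δ * ∑ i ∈ Finset.range N, wQ i))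

lemma wP_pos (i : ℕ) : 0 < wP i := by unfold wP; positivity

lemma wQ_pos (i : ℕ) : 0 < wQ i := by unfold wQ; positivity

lemma wQ_le_wP (i : ℕ) : wQ i ≤ wP i := by
  unfold wQ wP
  exact mul_le_of_le_one_right (by positivity) (pow_le_one₀ (by norm_num) (by norm_num))

lemma wP_div_wQ (i : ℕ) : wP i / wQ i = 2 ^ (2 ^ i : ℕ) := by
  unfold wP wQ
  rw [one_div_pow 2 (2 ^ i)]
  field_simp

lemma sum_wP_Ico_le (i N : ℕ) : ∑ j ∈ Finset.Ico i N, wP j ≤ 2 * wP i := by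
  rcases le_total N i with h | h
  · rw [Finset.Ico_eq_empty_of_le h, Finset.sum_empty]
    have := wP_pos i
    positivity
  · have key : ∑ j ∈ Finset.Ico i N, wP j = 2 * wP i - 2 * wP N := by
      induction N, h using Nat.le_induction with
      | base => simp
      | succ n hn ih =>
        rw [Finset.sum_Ico_succ_top hn, ih]
        unfold wP
        rw [pow_succ]
        ring
    have := wP_pos N
    linarith

lemma sum_wP_le (N : ℕ) : ∑ j ∈ Finset.range N, wP j ≤ 2 := by
  have := sum_wP_Ico_le 0 N
  rw [← Finset.range_eq_Ico] at this
  simpa [wP] using this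

lemma sum_wQ_le (N : ℕ) : ∑ j ∈ Finset.range N, wQ j ≤ ∑ j ∈ Finset.range N, wP j :=
  Finset.sum_le_sum fun i _ => wQ_le_wP i

lemma capped_of_lt {w : ℕ → ℝ} {N y : ℕ} {δ : ℝ} (h : y < N) : capped w N δ y = δ * w y := by
  simp [capped, h]

lemma capped_self (w : ℕ → ℝ) (N : ℕ) (δ : ℝ) :
    capped w N δ N = 1 - δ * ∑ i ∈ Finset.range N, w i := by
  simp [capped]

lemma capped_of_notMem {w : ℕ → ℝ} {N y : ℕ} {δ : ℝ} (h : y ∉ Finset.range (N + 1)) :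
    capped w N δ y = 0 := by
  rw [Finset.mem_range] at h
  have h1 : ¬ y < N := by omega
  have h2 : y ≠ N := by omega
  simp [capped, h1, h2]

lemma capped_nonneg {w : ℕ → ℝ} (hw : ∀ i, 0 < w i) {N : ℕ} {δ : ℝ} (hδ : 0 < δ)
    (hN : 0 < 1 - δ * ∑ i ∈ Finset.range N, w i) (y : ℕ) : 0 ≤ capped w N δ y := by
  unfold capped
  split_ifs
  · exact (mul_pos hδ (hw y)).le
  · exact hN.le
  · exact le_rfl

lemma capped_pos {w : ℕ → ℝ} (hw : ∀ i, 0 < w i) {N : ℕ} {δ : ℝ} (hδ : 0 < δ)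
    (hN : 0 < 1 - δ * ∑ i ∈ Finset.range N, w i) {y : ℕ} (hy : y ∈ Finset.range (N + 1)) :
    0 < capped w N δ y := by
  rcases Nat.lt_succ_iff_lt_or_eq.1 (Finset.mem_range.1 hy) with h | rfl
  · rw [capped_of_lt h]
    exact mul_pos hδ (hw y)
  · rwa [capped_self]

lemma sum_capped (w : ℕ → ℝ) (N : ℕ) (δ : ℝ) :
    ∑ y ∈ Finset.range (N + 1), capped w N δ y = 1 := by
  rw [Finset.sum_range_succ, capped_self,
    Finset.sum_congr rfl (fun y hy => capped_of_lt (Finset.mem_range.1 hy)), ← Finset.mul_sum]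
  ring

lemma isPMF_capped {w : ℕ → ℝ} (hw : ∀ i, 0 < w i) {N : ℕ} {δ : ℝ} (hδ : 0 < δ)
    (hN : 0 < 1 - δ * ∑ i ∈ Finset.range N, w i) : IsPMF (capped w N δ) := by
  refine ⟨capped_nonneg hw hδ hN, ?_, ?_⟩
  · exact summable_of_ne_finset_zero (s := Finset.range (N + 1)) fun y hy => capped_of_notMem hy
  · rw [tsum_eq_sum (s := Finset.range (N + 1)) fun y hy => capped_of_notMem hy, sum_capped]

lemma pushPMF_capped (w : ℕ → ℝ) (N : ℕ) (δ : ℝ) {M : ℕ} (f : ℕ → Fin M) (m : Fin M) :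
    pushPMF (capped w N δ) f m =
      ∑ y ∈ (Finset.range (N + 1)).filter (fun y => f y = m), capped w N δ y := by
  unfold pushPMF
  rw [tsum_eq_sum (s := Finset.range (N + 1)), Finset.sum_filter]
  intro y hy
  simp [capped_of_notMem hy]

lemma klBits_capped {N : ℕ} {δ : ℝ} (hδ : 0 < δ) :
    klBits (capped wP N δ) (capped wQ N δ) = divFun N δ := by
  unfold klBits divFun
  rw [tsum_eq_sum (s := Finset.range (N + 1)) (fun y hy => by simp [capped_of_notMem hy]),
    Finset.sum_range_succ, capped_self, capped_self]
  congr 1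
  have : ∀ y ∈ Finset.range N,
      capped wP N δ y * Real.logb 2 (capped wP N δ y / capped wQ N δ y) = δ := by
    intro y hy
    rw [Finset.mem_range] at hy
    rw [capped_of_lt hy, capped_of_lt hy, mul_div_mul_left _ _ hδ.ne', wP_div_wQ,
      Real.logb_pow, Real.logb_self_eq_one (by norm_num), wP]
    push_cast
    rw [one_div_pow]
    field_simp
  rw [Finset.sum_congr rfl this]
  simp

/-- Every cell of a quantizer contributes at most `ε` to the divergence. -/
lemma cell_bound {ε δ : ℝ} (hε : 0 < ε) (hδ : 0 < δ) (hδε : 4 * δ ≤ ε)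
    (hδ2 : (2 : ℝ) ^ (-ε) ≤ 1 - 2 * δ) {N : ℕ} {S : Finset ℕ} (hS : S ⊆ Finset.range (N + 1)) :
    (∑ y ∈ S, capped wP N δ y) *
      Real.logb 2 ((∑ y ∈ S, capped wP N δ y) / ∑ y ∈ S, capped wQ N δ y) ≤ ε := by
  have hpos : (0 : ℝ) < 2 ^ (-ε) := by positivity
  have hW := mul_le_mul_of_nonneg_left (sum_wP_le N) hδ.le
  have hVW := mul_le_mul_of_nonneg_left (sum_wQ_le N) hδ.le
  have hP : 0 < 1 - δ * ∑ i ∈ Finset.range N, wP i := by linarith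
  have hQ : 0 < 1 - δ * ∑ i ∈ Finset.range N, wQ i := by linarith
  have hPn := capped_nonneg wP_pos hδ hP
  have hQn := capped_nonneg wQ_pos hδ hQ
  rcases S.eq_empty_or_nonempty with rfl | hne
  · simpa using hε.le
  have ha : 0 < ∑ y ∈ S, capped wP N δ y :=
    Finset.sum_pos (fun y hy => capped_pos wP_pos hδ hP (hS hy)) hne
  have hb : 0 < ∑ y ∈ S, capped wQ N δ y :=
    Finset.sum_pos (fun y hy => capped_pos wQ_pos hδ hQ (hS hy)) hne
  have ha1 : ∑ y ∈ S, capped wP N δ y ≤ 1 := by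
    rw [← sum_capped wP N δ]
    exact Finset.sum_le_sum_of_subset_of_nonneg hS fun y _ _ => hPn y
  by_cases hNS : N ∈ S
  · have hbN := Finset.single_le_sum (fun y _ => hQn y) hNS
    rw [capped_self] at hbN
    have hlog : Real.logb 2 ((∑ y ∈ S, capped wP N δ y) / ∑ y ∈ S, capped wQ N δ y) ≤ ε := by
      rw [Real.logb_le_iff_le_rpow (by norm_num) (div_pos ha hb), div_le_iff₀ hb]
      have h1 : (2 : ℝ) ^ ε * 2 ^ (-ε) = 1 := by
        rw [← Real.rpow_add (by norm_num)]
        simp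
      calc _ ≤ (1 : ℝ) := ha1
        _ = 2 ^ ε * 2 ^ (-ε) := h1.symm
        _ ≤ _ := mul_le_mul_of_nonneg_left (by linarith) (by positivity)
    calc _ ≤ (∑ y ∈ S, capped wP N δ y) * ε := mul_le_mul_of_nonneg_left hlog ha.le
      _ ≤ ε := mul_le_of_le_one_left hε.le ha1
  · set i := S.min' hne with hi
    have hiS : i ∈ S := S.min'_mem hne
    have hlt : ∀ y ∈ S, y < N := fun y hy => by
      have h1 := Finset.mem_range.1 (hS hy)
      have h2 : y ≠ N := fun h => hNS (h ▸ hy)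
      omega
    have haw : ∑ y ∈ S, capped wP N δ y ≤ 2 * (δ * wP i) := by
      rw [Finset.sum_congr rfl (fun y hy => capped_of_lt (hlt y hy)), ← Finset.mul_sum]
      have hsub : S ⊆ Finset.Ico i N := fun y hy =>
        Finset.mem_Ico.2 ⟨S.min'_le y hy, hlt y hy⟩
      have := (Finset.sum_le_sum_of_subset_of_nonneg hsub fun y _ _ => (wP_pos y).le).trans
        (sum_wP_Ico_le i N)
      nlinarith
    have hbw := Finset.single_le_sum (fun y _ => hQn y) hiS
    rw [capped_of_lt (hlt i hiS)] at hbw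
    have hlog : Real.logb 2 ((∑ y ∈ S, capped wP N δ y) / ∑ y ∈ S, capped wQ N δ y)
        ≤ 1 + 2 ^ i := by
      have hratio : (∑ y ∈ S, capped wP N δ y) / ∑ y ∈ S, capped wQ N δ y
          ≤ (2 : ℝ) ^ (1 + 2 ^ i : ℕ) := by
        calc _ ≤ 2 * (δ * wP i) / (δ * wQ i) :=
              div_le_div₀ (by have := wP_pos i; positivity) haw (mul_pos hδ (wQ_pos i)) hbw
          _ = 2 * (wP i / wQ i) := by rw [mul_div_assoc, mul_div_mul_left _ _ hδ.ne']
          _ = _ := by rw [wP_div_wQ, pow_add, pow_one]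
      calc _ ≤ Real.logb 2 ((2 : ℝ) ^ (1 + 2 ^ i : ℕ)) :=
            Real.logb_le_logb_of_le (by norm_num) (div_pos ha hb) hratio
        _ = _ := by
            rw [Real.logb_pow, Real.logb_self_eq_one (by norm_num)]
            push_cast
            ring
    have hwi : wP i * 2 ^ i = 1 := by
      rw [wP, ← mul_pow]
      norm_num
    have hw1 : wP i ≤ 1 := pow_le_one₀ (by norm_num) (by norm_num)
    calc _ ≤ (∑ y ∈ S, capped wP N δ y) * (1 + 2 ^ i) := mul_le_mul_of_nonneg_left hlog ha.le
      _ ≤ 2 * (δ * wP i) * (1 + 2 ^ i) := mul_le_mul_of_nonneg_right haw (by positivity)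
      _ = 2 * δ * (wP i + wP i * 2 ^ i) := by ring
      _ ≤ 2 * δ * (1 + 1) := by
          rw [hwi]
          gcongr
      _ ≤ ε := by linarith

/-- The term of the point `N` is at least `-|ε|`, so `N ≥ (β + |ε|) / δ₀` makes the divergence at `δ₀`
at least `β`; the intermediate value theorem on `[0, δ₀]` then applies. -/
lemma exists_divFun_eq {β ε δ₀ : ℝ} (hβ : 0 < β) (hδ₀ : 0 < δ₀)
    (hδ2 : (2 : ℝ) ^ (-ε) ≤ 1 - 2 * δ₀) :
    ∃ (N : ℕ) (δ : ℝ), 0 < δ ∧ δ ≤ δ₀ ∧ divFun N δ = β := by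
  obtain ⟨N, hN⟩ := exists_nat_ge ((β + |ε|) / δ₀)
  rw [div_le_iff₀ hδ₀] at hN
  have hpos : (0 : ℝ) < 2 ^ (-ε) := by positivity
  have hWnn : 0 ≤ ∑ i ∈ Finset.range N, wP i := Finset.sum_nonneg fun i _ => (wP_pos i).le
  have hVnn : 0 ≤ ∑ i ∈ Finset.range N, wQ i := Finset.sum_nonneg fun i _ => (wQ_pos i).le
  have hWle := sum_wP_le N
  have hVW := sum_wQ_le N
  have hden : ∀ δ ∈ Set.Icc 0 δ₀, 2 ^ (-ε) ≤ 1 - δ * ∑ i ∈ Finset.range N, wP i ∧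
      2 ^ (-ε) ≤ 1 - δ * ∑ i ∈ Finset.range N, wQ i := by
    rintro δ ⟨h0, h1⟩
    constructor <;> nlinarith
  have hcont : ContinuousOn (divFun N) (Set.Icc 0 δ₀) := by
    unfold divFun Real.logb
    refine ContinuousOn.add (by fun_prop) (ContinuousOn.mul (by fun_prop)
      (ContinuousOn.div_const (ContinuousOn.log (ContinuousOn.div (by fun_prop) (by fun_prop) ?_)
        ?_) _))
    · intro δ hδ
      exact (hpos.trans_le (hden δ hδ).2).ne'
    · intro δ hδ
      exact (div_pos (hpos.trans_le (hden δ hδ).1) (hpos.trans_le (hden δ hδ).2)).ne'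
  have h0 : divFun N 0 = 0 := by simp [divFun]
  have h1 : β ≤ divFun N δ₀ := by
    obtain ⟨hP, hQ⟩ := hden δ₀ ⟨hδ₀.le, le_rfl⟩
    unfold divFun
    set p := 1 - δ₀ * ∑ i ∈ Finset.range N, wP i with hp
    set q := 1 - δ₀ * ∑ i ∈ Finset.range N, wQ i with hq
    have hq1 : q ≤ 1 := by
      have := mul_nonneg hδ₀.le hVnn
      linarith
    have hp1 : p ≤ 1 := by
      have := mul_nonneg hδ₀.le hWnn
      linarith
    have hp0 : 0 < p := hpos.trans_le hP
    have hq0 : 0 < q := hpos.trans_le hQ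
    have hlog : -ε ≤ Real.logb 2 (p / q) := by
      rw [Real.le_logb_iff_rpow_le (by norm_num) (div_pos hp0 hq0), le_div_iff₀ hq0]
      nlinarith
    have hlog2 : -|ε| ≤ Real.logb 2 (p / q) := by
      have := le_abs_self ε
      linarith
    have : -|ε| ≤ p * Real.logb 2 (p / q) := by
      have := abs_nonneg ε
      nlinarith
    linarith
  obtain ⟨δ, hδ, hδe⟩ := intermediate_value_Icc hδ₀.le hcont (show β ∈ Set.Icc _ _ from
    ⟨h0.trans_le hβ.le, h1⟩)
  refine ⟨N, δ, lt_of_le_of_ne hδ.1 ?_, hδ.2, hδe⟩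
  rintro rfl
  linarith

/-- Proposition 6: for any `β, ε > 0` there exist pmfs `P ≪ Q` on `ℕ` with
`D(P‖Q) = β` and `ψ_M(P,Q) ≤ M ε` for every `M`. -/
theorem divergence_quantization_bad (β ε : ℝ) (hβ : 0 < β) (hε : 0 < ε) :
    ∃ P Q : ℕ → ℝ, IsPMF P ∧ IsPMF Q ∧ (∀ y, Q y = 0 → P y = 0) ∧
      klBits P Q = β ∧
      ∀ M : ℕ, 0 < M →
        (⨆ f : ℕ → Fin M, klBits (pushPMF P f) (pushPMF Q f)) ≤ (M : ℝ) * ε := by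
  have h2ε : (2 : ℝ) ^ (-ε) < 1 := Real.rpow_lt_one_of_one_lt_of_neg (by norm_num) (by linarith)
  have hpos : (0 : ℝ) < 2 ^ (-ε) := by positivity
  have hδ₀ : 0 < min (ε / 4) ((1 - (2 : ℝ) ^ (-ε)) / 2) := lt_min (by linarith) (by linarith)
  have hmin1 := min_le_left (ε / 4) ((1 - (2 : ℝ) ^ (-ε)) / 2)
  have hmin2 := min_le_right (ε / 4) ((1 - (2 : ℝ) ^ (-ε)) / 2)
  obtain ⟨N, δ, hδ, hle, hdiv⟩ := exists_divFun_eq (ε := ε) hβ hδ₀ (by linarith)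
  have hδ2 : (2 : ℝ) ^ (-ε) ≤ 1 - 2 * δ := by linarith
  have hW := mul_le_mul_of_nonneg_left (sum_wP_le N) hδ.le
  have hVW := mul_le_mul_of_nonneg_left (sum_wQ_le N) hδ.le
  have hP : 0 < 1 - δ * ∑ i ∈ Finset.range N, wP i := by linarith
  have hQ : 0 < 1 - δ * ∑ i ∈ Finset.range N, wQ i := by linarith
  refine ⟨capped wP N δ, capped wQ N δ, isPMF_capped wP_pos hδ hP, isPMF_capped wQ_pos hδ hQ,
    ?_, (klBits_capped hδ).trans hdiv, ?_⟩
  · intro y hy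
    by_contra h
    have hmem : y ∈ Finset.range (N + 1) := by
      by_contra hn
      exact h (capped_of_notMem hn)
    exact (capped_pos wQ_pos hδ hQ hmem).ne' hy
  · intro M hM
    have : Nonempty (Fin M) := ⟨⟨0, hM⟩⟩
    refine ciSup_le fun f => ?_
    unfold klBits
    rw [tsum_fintype]
    calc _ ≤ ∑ _m : Fin M, ε := Finset.sum_le_sum fun m _ => by
          rw [pushPMF_capped, pushPMF_capped]
          exact cell_bound hε hδ (by linarith) hδ2 (Finset.filter_subset _ _)
      _ = M * ε := by simp
end

section
/- For any joint distribution P_{XY} with |𝒳| = 2 and I(X;Y) = β ∈ (0,1], and any η ∈ (0,1), it holds that I(X;[Y]_{M̄}) ≥ η·β, where M̄ = ⌊ (52/(1-η)) · max{ log(1/β), 1 } ⌋. -/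
/-!
Write `A₀, A₁` for the law of `X`, `a_y` for the posterior probability of `X = 0` given `Y = y`,
and `φ(a)` for the binary divergence `d(a ‖ A₀)` in bits. Then `I(X;Y) = ∑ P(y) φ(a_y)`, and
merging a set of letters of mass `W` into one letter of mean posterior `ā` contributes `W φ(ā)`.

The quantizer puts `y` and `y'` into the same cell when `a_y`, `a_y'` lie on the same side of
`A₀` and `φ + β` lies in the same interval `[β r^k, β r^(k+1))`, where `r = 1 / (1 - (1-η)/2)`.
Since `φ` is convex with minimum `0` at `A₀`, it is monotone on each side of `A₀`; some letter of
the cell has its posterior between `A₀` and `ā`, so `φ(a_y) + β ≤ r (φ(ā) + β)` throughout the cell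
(`cell_bound`). Averaging gives `2β ≤ r (I(X;f(Y)) + β)`, that is `I(X;f(Y)) ≥ η β`.

The number of cells is about `2 log(1 + max φ / β) / log r` with `log r ≥ (1-η)/2`. Here `max φ` is
at most `max_x log(1/A_x)`, and `β ≤ H(X) ≤ 3 √A_x` bounds this by `6 max(log(1/β), 1)`, which makes
the number of cells at most `(30/(1-η)) max(log(1/β), 1)`.
-/

open scoped BigOperators

namespace BinQuant

/-! ### Binary divergence -/

/-- One summand `u log₂(u / (c w))` of the mutual information: `u` is a joint probability and
`c`, `w` are the corresponding marginals. -/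
noncomputable def T (c u w : ℝ) : ℝ := u * Real.logb 2 (u / (c * w))

/-- Binary divergence `d(a ‖ A)` in bits, where `B` stands for `1 - A`. -/
noncomputable def phi (A B a : ℝ) : ℝ := T A a 1 + T B (1 - a) 1

lemma T_le {c u w : ℝ} (hc : 0 ≤ c) (hu : 0 ≤ u) (huw : u ≤ w) :
    T c u w ≤ u * Real.logb 2 (1 / c) := by
  unfold T
  rcases hu.eq_or_lt with rfl | hu
  · simp
  rcases hc.eq_or_lt with rfl | hc
  · simp
  have hw : 0 < w := lt_of_lt_of_le hu huw
  refine mul_le_mul_of_nonneg_left ?_ hu.le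
  refine Real.logb_le_logb_of_le (by norm_num) (by positivity) ?_
  rw [div_le_div_iff₀ (by positivity) hc]
  nlinarith

/-- Gibbs' inequality, term by term. -/
lemma le_T {c u w : ℝ} (hc : 0 < c) (hu : 0 ≤ u) (huw : u ≤ w) :
    (u - c * w) / Real.log 2 ≤ T c u w := by
  have hl : 0 < Real.log 2 := Real.log_pos (by norm_num)
  unfold T
  rw [Real.logb, ← mul_div_assoc]
  refine div_le_div_of_nonneg_right ?_ hl.le
  rcases hu.eq_or_lt with rfl | hu
  · simp; positivity
  have hw : 0 < w := lt_of_lt_of_le hu huw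
  have h := Real.one_sub_inv_le_log_of_pos (show 0 < u / (c * w) by positivity)
  calc u - c * w = u * (1 - (u / (c * w))⁻¹) := by field_simp
    _ ≤ _ := mul_le_mul_of_nonneg_left h hu.le

lemma abs_T_le {c u w : ℝ} (hc : 0 ≤ c) (hu : 0 ≤ u) (huw : u ≤ w) :
    ‖T c u w‖ ≤ u * |Real.logb 2 (1 / c)| + w * (c / Real.log 2) := by
  have hl : 0 < Real.log 2 := Real.log_pos (by norm_num)
  have hw : 0 ≤ w := hu.trans huw
  have hx : 0 ≤ w * (c / Real.log 2) := by positivity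
  have hy : 0 ≤ u * |Real.logb 2 (1 / c)| := by positivity
  rw [Real.norm_eq_abs, abs_le]
  constructor
  · rcases hc.eq_or_lt with rfl | hc
    · simp [T]
    have h := le_T hc hu huw
    have h2 : (u - c * w) / Real.log 2 = u / Real.log 2 - w * (c / Real.log 2) := by ring
    have h3 : 0 ≤ u / Real.log 2 := by positivity
    linarith
  · have h := T_le hc hu huw
    have h2 := mul_le_mul_of_nonneg_left (le_abs_self (Real.logb 2 (1 / c))) hu
    linarith

lemma T_hom (c u : ℝ) {w : ℝ} (hw : w ≠ 0) : T c u w = w * T c (u / w) 1 := by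
  unfold T
  rw [mul_one, ← mul_assoc, mul_div_cancel₀ _ hw, div_div, mul_comm w c]

/-- Convexity of `T c · 1`, which vanishes at `c`, along the segment from `c` to `a`. -/
lemma T_segment {c a l : ℝ} (hc : 0 < c) (ha : 0 ≤ a) (hl0 : 0 ≤ l) (hl1 : l ≤ 1) :
    T c ((1 - l) * c + l * a) 1 ≤ l * T c a 1 := by
  have hl : 0 < Real.log 2 := Real.log_pos (by norm_num)
  have key : ∀ x, 0 ≤ x → T c x 1 = (x * Real.log x - x * Real.log c) / Real.log 2 := by
    intro x hx
    rcases hx.eq_or_lt with rfl | hx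
    · simp [T]
    · unfold T
      rw [mul_one, Real.logb, Real.log_div hx.ne' hc.ne']
      ring
  have hb : 0 ≤ (1 - l) * c + l * a := by
    have : 0 ≤ 1 - l := by linarith
    positivity
  have h := Real.convexOn_mul_log.2 (Set.mem_Ici.2 hc.le) (Set.mem_Ici.2 ha)
    (sub_nonneg.2 hl1) hl0 (sub_add_cancel 1 l)
  simp only [smul_eq_mul] at h
  rw [key _ hb, key _ ha, ← mul_div_assoc]
  refine div_le_div_of_nonneg_right ?_ hl.le
  linarith

lemma phi_nonneg {A B a : ℝ} (hA : 0 < A) (hB : 0 < B) (hAB : A + B = 1) (ha : 0 ≤ a)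
    (ha1 : a ≤ 1) : 0 ≤ phi A B a := by
  have h1 := le_T hA ha ha1
  have h2 := le_T hB (sub_nonneg.2 ha1) (by linarith : 1 - a ≤ 1)
  have : (a - A * 1) / Real.log 2 + (1 - a - B * 1) / Real.log 2 = 0 := by
    rw [← add_div]
    have : a - A * 1 + (1 - a - B * 1) = 0 := by linarith
    rw [this, zero_div]
  unfold phi
  linarith

/-- The divergence from `A` grows when moving away from `A` on either side. -/
lemma phi_mono {A B a b : ℝ} (hA : 0 < A) (hB : 0 < B) (hAB : A + B = 1) (ha : 0 ≤ a)
    (ha1 : a ≤ 1) (hb : (A ≤ b ∧ b ≤ a) ∨ (a ≤ b ∧ b ≤ A)) : phi A B b ≤ phi A B a := by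
  obtain ⟨l, hl0, hl1, hl⟩ : ∃ l : ℝ, 0 ≤ l ∧ l ≤ 1 ∧ b = (1 - l) * A + l * a := by
    by_cases h : a = A
    · subst h
      refine ⟨0, le_rfl, zero_le_one, ?_⟩
      rcases hb with hb | hb <;> linarith [hb.1, hb.2]
    · have h' : a - A ≠ 0 := sub_ne_zero.2 h
      refine ⟨(b - A) / (a - A), ?_, ?_, ?_⟩
      · rcases hb with hb | hb
        · exact div_nonneg (by linarith [hb.1]) (by linarith [hb.1, hb.2])
        · exact div_nonneg_of_nonpos (by linarith [hb.2]) (by linarith [hb.1, hb.2])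
      · rcases hb with hb | hb
        · exact div_le_one_of_le₀ (by linarith [hb.2]) (by linarith [hb.1, hb.2])
        · exact div_le_one_of_ge (by linarith [hb.1]) (by linarith [hb.1, hb.2])
      · field_simp
        ring
  have h1 := T_segment hA ha hl0 hl1
  have h2 := T_segment hB (sub_nonneg.2 ha1) hl0 hl1
  have e : (1 - l) * B + l * (1 - a) = 1 - b := by
    rw [hl, show B = 1 - A by linarith]; ring
  rw [← hl] at h1
  rw [e] at h2
  have h0 := phi_nonneg hA hB hAB ha ha1
  have : l * phi A B a ≤ phi A B a := mul_le_of_le_one_left h0 hl1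
  unfold phi at *
  linarith

/-! ### Entropy bounds -/

/-- Binary entropy is `O(√q)`; the constant is `2 / log 2 ≤ 3`. -/
lemma entropy_le {q : ℝ} (hq : 0 ≤ q) (hq1 : q ≤ 1) :
    q * Real.logb 2 (1 / q) + (1 - q) * Real.logb 2 (1 / (1 - q)) ≤ 3 * √q := by
  have hl : 0 < Real.log 2 := Real.log_pos (by norm_num)
  have hl2 := Real.log_two_gt_d9
  have hs := Real.sqrt_nonneg q
  have hss := Real.mul_self_sqrt hq
  have h1 : q * Real.log (1 / q) ≤ 2 * √q - 2 * q := by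
    rcases hq.eq_or_lt with rfl | hq
    · simp
    have hsp := Real.sqrt_pos.2 hq
    have h := Real.log_le_sub_one_of_pos (show 0 < 1 / √q by positivity)
    have e : Real.log (1 / q) = 2 * Real.log (1 / √q) := by
      rw [one_div, one_div, Real.log_inv, Real.log_inv, Real.log_sqrt hq.le]; ring
    rw [e]
    have : q * (1 / √q) = √q := by
      rw [mul_one_div, Real.div_sqrt]
    nlinarith
  have h2 : (1 - q) * Real.log (1 / (1 - q)) ≤ q := by
    rcases hq1.eq_or_lt with rfl | hq1
    · simp
    have hp : 0 < 1 - q := by linarith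
    have h := Real.log_le_sub_one_of_pos (show 0 < 1 / (1 - q) by positivity)
    have h' := mul_le_mul_of_nonneg_left h hp.le
    have : (1 - q) * (1 / (1 - q) - 1) = q := by field_simp; ring
    linarith
  rw [Real.logb, Real.logb, ← mul_div_assoc, ← mul_div_assoc, ← add_div, div_le_iff₀ hl]
  nlinarith

/-- If `β` is at most the entropy bound `3 √q`, then `log₂(1/q)` is of order `log₂(1/β)`. -/
lemma logb_inv_le {q β L : ℝ} (hq : 0 ≤ q) (hβ0 : 0 < β) (h : β ≤ 3 * √q)
    (hL : Real.logb 2 (1 / β) ≤ L) (hL1 : 1 ≤ L) : 0 < q ∧ Real.logb 2 (1 / q) ≤ 6 * L := by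
  have hss := Real.mul_self_sqrt hq
  have h1 : β ^ 2 ≤ 9 * q := by nlinarith [Real.sqrt_nonneg q]
  have hq0 : 0 < q := by nlinarith [pow_pos hβ0 2]
  refine ⟨hq0, ?_⟩
  have h2 : 1 / q ≤ 2 ^ (4 : ℕ) * (1 / β) ^ 2 := by
    rw [one_div_pow, mul_one_div, div_le_div_iff₀ hq0 (by positivity)]
    linarith
  have h3 := Real.logb_le_logb_of_le (b := 2) (by norm_num) (by positivity) h2
  rw [Real.logb_mul (by positivity) (by positivity), Real.logb_pow, Real.logb_pow,
    Real.logb_self_eq_one (by norm_num)] at h3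
  push_cast at h3
  linarith

/-! ### Quantization cells -/

/-- On a cell whose letters have posteriors on one side of `A` and values of `φ + β` within a
factor `r` of each other, merging costs at most a factor `r` in `φ + β`. -/
lemma cell_bound {𝒴 : Type*} {A B β r : ℝ} (hA : 0 < A) (hB : 0 < B) (hAB : A + B = 1)
    (hr : 0 < r) (u v : 𝒴 → ℝ) (hu : ∀ y, 0 ≤ u y) (hv : ∀ y, 0 ≤ v y)
    (hus : Summable u) (hvs : Summable v) (S : 𝒴 → Prop)
    (hS0 : ∀ y, ¬ S y → u y = 0 ∧ v y = 0)
    (hS : ∀ y y', S y → S y' →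
      ((A ≤ u y / (u y + v y) ↔ A ≤ u y' / (u y' + v y')) ∧
        phi A B (u y / (u y + v y)) + β ≤ r * (phi A B (u y' / (u y' + v y')) + β)))
    (hg : Summable fun y => T A (u y) (u y + v y) + T B (v y) (u y + v y)) :
    (∑' y, (T A (u y) (u y + v y) + T B (v y) (u y + v y))) + β * ((∑' y, u y) + ∑' y, v y)
      ≤ r * (T A (∑' y, u y) ((∑' y, u y) + ∑' y, v y)
          + T B (∑' y, v y) ((∑' y, u y) + ∑' y, v y) + β * ((∑' y, u y) + ∑' y, v y)) := by
  have G_eq : ∀ a b : ℝ, a + b ≠ 0 →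
      T A a (a + b) + T B b (a + b) = (a + b) * phi A B (a / (a + b)) := by
    intro a b h
    rw [T_hom A a h, T_hom B b h, phi, mul_add, one_sub_div h, add_sub_cancel_left]
  set U := ∑' y, u y with hU
  set V := ∑' y, v y with hV
  have hU0 : 0 ≤ U := tsum_nonneg hu
  have hV0 : 0 ≤ V := tsum_nonneg hv
  have hws : Summable fun y => u y + v y := hus.add hvs
  have hW : ∑' y, (u y + v y) = U + V := hus.tsum_add hvs
  have hw0 : ∀ y, 0 ≤ u y + v y := fun y => add_nonneg (hu y) (hv y)
  rcases (add_nonneg hU0 hV0).eq_or_lt with hz | hWp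
  · -- a cell of mass zero
    have hz' : ∀ y, u y + v y = 0 := by
      have := (hasSum_zero_iff_of_nonneg hw0).1 (by rw [hz, ← hW]; exact hws.hasSum)
      exact fun y => congrFun this y
    have hu' : ∀ y, u y = 0 := fun y => by linarith [hu y, hv y, hz' y]
    have hv' : ∀ y, v y = 0 := fun y => by linarith [hu y, hv y, hz' y]
    have hUz : U = 0 := by linarith
    have hVz : V = 0 := by linarith
    simp [hu', hv', hUz, hVz, T]
  set abar := U / (U + V) with habar
  have hbU : abar * (U + V) = U := div_mul_cancel₀ _ hWp.ne'
  have hb0 : 0 ≤ abar := div_nonneg hU0 hWp.le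
  have hb1 : abar ≤ 1 := div_le_one_of_le₀ (by linarith) hWp.le
  -- deviations from the mean posterior cancel, so among the letters of positive mass there is one
  -- with posterior at most `abar` and one with posterior at least `abar`
  have hds : Summable fun y => u y - abar * (u y + v y) := hus.sub (hws.mul_left _)
  have hd0 : ∑' y, (u y - abar * (u y + v y)) = 0 := by
    rw [hus.tsum_sub (hws.mul_left _), tsum_mul_left, hW, ← hU, hbU, sub_self]
  obtain ⟨y0, hy0⟩ : ∃ y, 0 < u y + v y := by
    by_contra! h
    have : ∑' y, (u y + v y) ≤ 0 := tsum_nonpos h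
    linarith
  have hlow : ∃ y, 0 < u y + v y ∧ u y / (u y + v y) ≤ abar := by
    by_contra! h
    have hn : ∀ y, 0 ≤ u y - abar * (u y + v y) := by
      intro y
      rcases (hw0 y).eq_or_lt with h0 | h0
      · rw [← h0]; simpa using hu y
      · have := (lt_div_iff₀ h0).1 (h y h0); linarith
    have := (lt_div_iff₀ hy0).1 (h y0 hy0)
    have h' := hds.tsum_pos hn y0 (by linarith)
    linarith
  have hhigh : ∃ y, 0 < u y + v y ∧ abar ≤ u y / (u y + v y) := by
    by_contra! h
    have hn : ∀ y, u y - abar * (u y + v y) ≤ 0 := by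
      intro y
      rcases (hw0 y).eq_or_lt with h0 | h0
      · rw [← h0]; linarith [hu y, hv y]
      · have := (div_lt_iff₀ h0).1 (h y h0); linarith
    have := (div_lt_iff₀ hy0).1 (h y0 hy0)
    have h' := hds.neg.tsum_pos (fun y => by linarith [hn y]) y0 (by linarith)
    rw [tsum_neg] at h'
    linarith
  have inS : ∀ y, 0 < u y + v y → S y := by
    intro y hy
    by_contra h
    have := hS0 y h
    linarith [this.1, this.2]
  obtain ⟨z, hz, hzphi⟩ : ∃ z, S z ∧ phi A B (u z / (u z + v z)) ≤ phi A B abar := by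
    obtain ⟨y1, hy1, hl⟩ := hlow
    obtain ⟨y2, hy2, hh⟩ := hhigh
    by_cases hs : A ≤ u y1 / (u y1 + v y1)
    · exact ⟨y1, inS _ hy1, phi_mono hA hB hAB hb0 hb1 (Or.inl ⟨hs, hl⟩)⟩
    · refine ⟨y2, inS _ hy2, phi_mono hA hB hAB hb0 hb1 (Or.inr ⟨hh, ?_⟩)⟩
      have := (hS y1 y2 (inS _ hy1) (inS _ hy2)).1.not.1 hs
      exact (not_le.1 this).le
  have hterm : ∀ y, T A (u y) (u y + v y) + T B (v y) (u y + v y) + β * (u y + v y) ≤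
      r * (phi A B abar + β) * (u y + v y) := by
    intro y
    rcases (hw0 y).eq_or_lt with h0 | h0
    · have h1 : u y = 0 := by linarith [hu y, hv y]
      have h2 : v y = 0 := by linarith [hu y, hv y]
      simp [h1, h2, T]
    · rw [G_eq _ _ h0.ne']
      have h1 := (hS y z (inS _ h0) hz).2
      have h2 : r * (phi A B (u z / (u z + v z)) + β) ≤ r * (phi A B abar + β) :=
        mul_le_mul_of_nonneg_left (by linarith) hr.le
      have := mul_le_mul_of_nonneg_right (h1.trans h2) h0.le
      linarith
  have hsum := (hg.add (hws.mul_left β)).tsum_le_tsum hterm (hws.mul_left _)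
  rw [hg.tsum_add (hws.mul_left β), tsum_mul_left, tsum_mul_left, hW] at hsum
  rw [G_eq _ _ hWp.ne']
  linarith

/-- Grouping by side and by `⌊log_r (1 + φ/β)⌋` takes at most `M` cells. -/
lemma exists_quantizer {𝒴 : Type*} {β r R : ℝ} (hβ : 0 < β) (hr : 1 < r) (M : ℕ)
    (hM : 2 * R + 2 ≤ M) (side : 𝒴 → Prop) (φ : 𝒴 → ℝ) (hφ : ∀ y, 0 ≤ φ y)
    (hR : ∀ y, Real.log (1 + φ y / β) / Real.log r ≤ R) (hR0 : 0 ≤ R) :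
    ∃ f : 𝒴 → Fin M, ∀ y y', f y = f y' →
      ((side y ↔ side y') ∧ φ y + β ≤ r * (φ y' + β)) := by
  classical
  have hlr : 0 < Real.log r := Real.log_pos hr
  set x : 𝒴 → ℝ := fun y => Real.log (1 + φ y / β) / Real.log r with hx
  have h1 : ∀ y, 1 ≤ 1 + φ y / β := fun y => by
    have := div_nonneg (hφ y) hβ.le
    linarith
  have hx0 : ∀ y, 0 ≤ x y := fun y => div_nonneg (Real.log_nonneg (h1 y)) hlr.le
  have hK : 2 * (⌊R⌋₊ + 1) ≤ M := by
    have := Nat.floor_le hR0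
    have h : ((2 * (⌊R⌋₊ + 1) : ℕ) : ℝ) ≤ M := by push_cast; linarith
    exact_mod_cast h
  have hxK : ∀ y, ⌊x y⌋₊ < ⌊R⌋₊ + 1 := fun y => Nat.lt_succ_of_le (Nat.floor_le_floor (hR y))
  refine ⟨fun y => ⟨⌊x y⌋₊ + if side y then ⌊R⌋₊ + 1 else 0, ?_⟩, ?_⟩
  · have := hxK y
    split_ifs <;> omega
  · intro y y' h
    have h := Fin.mk.inj h
    have k := hxK y
    have k' := hxK y'
    have hs : side y ↔ side y' := by
      by_cases a : side y <;> by_cases b : side y' <;> simp [a, b] at h ⊢ <;> omega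
    have hf : ⌊x y⌋₊ = ⌊x y'⌋₊ := by
      by_cases a : side y <;> by_cases b : side y' <;> simp [a, b] at h ⊢ <;> omega
    refine ⟨hs, ?_⟩
    have e1 := Nat.lt_floor_add_one (x y)
    have e2 := Nat.floor_le (hx0 y')
    rw [hf] at e1
    have e3 : x y * Real.log r ≤ (x y' + 1) * Real.log r :=
      mul_le_mul_of_nonneg_right (by linarith) hlr.le
    have p1 : 0 < 1 + φ y / β := by linarith [h1 y]
    have p2 : 0 < 1 + φ y' / β := by linarith [h1 y']
    rw [add_mul, one_mul] at e3
    simp only [hx, div_mul_cancel₀ _ hlr.ne'] at e3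
    rw [← Real.log_mul p2.ne' (by linarith), Real.log_le_log_iff p1 (by positivity)] at e3
    have := mul_le_mul_of_nonneg_left e3 hβ.le
    have q1 : β * (1 + φ y / β) = φ y + β := by field_simp; ring
    have q2 : β * ((1 + φ y' / β) * r) = r * (φ y' + β) := by field_simp; ring
    linarith

lemma sum_cells {𝒴 : Type*} {M : ℕ} (f : 𝒴 → Fin M) (g : 𝒴 → ℝ) (hg : Summable g) :
    (∀ m, Summable fun y => if f y = m then g y else 0) ∧
      ∑ m, ∑' y, (if f y = m then g y else 0) = ∑' y, g y := by
  classical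
  have h : ∀ m, Summable fun y => if f y = m then g y else 0 := by
    intro m
    have := hg.indicator {y | f y = m}
    refine this.congr fun y => ?_
    simp [Set.indicator_apply]
  refine ⟨h, ?_⟩
  rw [← Summable.tsum_finsetSum fun m _ => h m]
  simp

end BinQuant

/-! ### Quantized mutual information -/

open BinQuant in
/-- Theorem 3: for binary `X` with `I(X;Y) = β ∈ (0,1]` and any `η ∈ (0,1)`,
`⌊(52/(1-η)) max{log(1/β), 1}⌋` quantization levels retain a fraction `η` of the
mutual information. -/
theorem binary_lower_bound {𝒴 : Type*} [Countable 𝒴] (p : Fin 2 → 𝒴 → ℝ)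
    (hp : IsJointPMF p) (β : ℝ) (hβ : miBits p = β) (hβ0 : 0 < β) (hβ1 : β ≤ 1)
    (η : ℝ) (hη0 : 0 < η) (hη1 : η < 1) :
    η * β ≤ quantMI p ⌊52 / (1 - η) * max (Real.logb 2 (1 / β)) 1⌋₊ := by
  obtain ⟨hnn, hsum, htot⟩ := hp
  have hs : ∀ x, Summable (p x) := fun x => hsum.prod_factor x
  set u := p 0 with hu
  set v := p 1 with hv
  have hu0 : ∀ y, 0 ≤ u y := hnn 0
  have hv0 : ∀ y, 0 ≤ v y := hnn 1
  have hus : Summable u := hs 0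
  have hvs : Summable v := hs 1
  have hws : Summable fun y => u y + v y := hus.add hvs
  set A := ∑' y, u y with hA
  set B := ∑' y, v y with hB
  have hAB : A + B = 1 := by
    rw [tsum_fintype, Fin.sum_univ_two] at htot
    exact htot
  have hA0 : 0 ≤ A := tsum_nonneg hu0
  have hB0 : 0 ≤ B := tsum_nonneg hv0
  have huw : ∀ y, u y ≤ u y + v y := fun y => by linarith [hv0 y]
  have hvw : ∀ y, v y ≤ u y + v y := fun y => by linarith [hu0 y]
  have hTA : Summable fun y => T A (u y) (u y + v y) :=
    Summable.of_norm_bounded ((hus.mul_right _).add (hws.mul_right _))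
      fun y => abs_T_le hA0 (hu0 y) (huw y)
  have hTB : Summable fun y => T B (v y) (u y + v y) :=
    Summable.of_norm_bounded ((hvs.mul_right _).add (hws.mul_right _))
      fun y => abs_T_le hB0 (hv0 y) (hvw y)
  have hmi : (∑' y, T A (u y) (u y + v y)) + ∑' y, T B (v y) (u y + v y) = β := by
    rw [← hβ]
    simp only [miBits, tsum_fintype, Fin.sum_univ_two]
    rfl
  -- `β ≤ H(X)`
  have hent : β ≤ A * Real.logb 2 (1 / A) + B * Real.logb 2 (1 / B) := by
    have h1 := hTA.tsum_le_tsum (fun y => T_le hA0 (hu0 y) (huw y)) (hus.mul_right _)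
    have h2 := hTB.tsum_le_tsum (fun y => T_le hB0 (hv0 y) (hvw y)) (hvs.mul_right _)
    rw [tsum_mul_right] at h1 h2
    linarith
  set L := max (Real.logb 2 (1 / β)) 1 with hL
  have hLβ : Real.logb 2 (1 / β) ≤ L := le_max_left _ _
  have hL1 : 1 ≤ L := le_max_right _ _
  obtain ⟨hAp, hAL⟩ : 0 < A ∧ Real.logb 2 (1 / A) ≤ 6 * L := by
    refine logb_inv_le hA0 hβ0 (le_trans ?_ (entropy_le hA0 (by linarith))) hLβ hL1
    rwa [show 1 - A = B by linarith]
  obtain ⟨hBp, hBL⟩ : 0 < B ∧ Real.logb 2 (1 / B) ≤ 6 * L := by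
    refine logb_inv_le hB0 hβ0 (le_trans ?_ (entropy_le hB0 (by linarith))) hLβ hL1
    rw [show 1 - B = A by linarith]
    linarith
  have hphiL : ∀ a, 0 ≤ a → a ≤ 1 → phi A B a ≤ 6 * L := by
    intro a ha ha1
    have h1 := T_le hA0 ha ha1
    have h2 := T_le hB0 (sub_nonneg.2 ha1) (by linarith : 1 - a ≤ 1)
    have h3 := mul_le_mul_of_nonneg_left hAL ha
    have h4 := mul_le_mul_of_nonneg_left hBL (sub_nonneg.2 ha1)
    unfold phi
    linarith
  set a : 𝒴 → ℝ := fun y => u y / (u y + v y) with ha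
  have ha0 : ∀ y, 0 ≤ a y := fun y => div_nonneg (hu0 y) (add_nonneg (hu0 y) (hv0 y))
  have ha1 : ∀ y, a y ≤ 1 := fun y => div_le_one_of_le₀ (huw y) (add_nonneg (hu0 y) (hv0 y))
  have hφ0 : ∀ y, 0 ≤ phi A B (a y) := fun y => phi_nonneg hAp hBp hAB (ha0 y) (ha1 y)
  set M := ⌊52 / (1 - η) * L⌋₊ with hM
  set d := 1 - η with hd
  have hd0 : 0 < d := by linarith
  have hd1 : d < 1 := by linarith
  set r := 1 / (1 - d / 2) with hr
  have hr0 : 0 < 1 - d / 2 := by linarith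
  have hr1 : 1 < r := by rw [hr, lt_div_iff₀ hr0]; linarith
  have hlogr : d / 2 ≤ Real.log r := by
    rw [hr, one_div, Real.log_inv]
    linarith [Real.log_le_sub_one_of_pos hr0]
  have hlogb : ∀ y, Real.log (1 + phi A B (a y) / β) ≤ 7 * L := by
    intro y
    have h1 : 1 + phi A B (a y) / β ≤ (1 + 6 * L) * (1 / β) := by
      rw [mul_one_div, le_div_iff₀ hβ0, add_mul, div_mul_cancel₀ _ hβ0.ne']
      linarith [hphiL _ (ha0 y) (ha1 y)]
    have h0 : 0 < 1 + phi A B (a y) / β := by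
      have := div_nonneg (hφ0 y) hβ0.le
      linarith
    have h2 := Real.log_le_log h0 h1
    rw [Real.log_mul (by positivity) (by positivity)] at h2
    have h3 := Real.log_le_sub_one_of_pos (show 0 < 1 + 6 * L by positivity)
    have h4 : Real.log (1 / β) = Real.logb 2 (1 / β) * Real.log 2 := by
      rw [Real.logb, div_mul_cancel₀]
      exact (Real.log_pos (by norm_num)).ne'
    have h5 : Real.log (1 / β) ≤ L := by
      rw [h4]
      have := Real.log_two_lt_d9
      have h7 : 0 < Real.log 2 := Real.log_pos (by norm_num)
      nlinarith
    linarith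
  obtain ⟨f, hf⟩ := exists_quantizer (R := 14 * L / d) hβ0 hr1 M (by
      have h1 : (30 * L / d) ≤ M := by
        have h2 : 52 / d * L < M + 1 := Nat.lt_floor_add_one _
        have h3 : 52 / d * L = 30 * L / d + 22 * L / d := by ring
        have h4 : 1 ≤ 22 * L / d := by rw [le_div_iff₀ hd0]; linarith
        linarith
      have h2 : 30 * L / d = 2 * (14 * L / d) + 2 * L / d := by ring
      have h3 : 2 ≤ 2 * L / d := by rw [le_div_iff₀ hd0]; nlinarith
      linarith) (fun y => A ≤ a y) (fun y => phi A B (a y)) hφ0 (by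
      intro y
      have h0 : 0 < Real.log r := by linarith
      rw [div_le_div_iff₀ h0 hd0]
      nlinarith [hlogb y]) (by positivity)
  -- the mutual information of a quantized pair, with its marginals evaluated
  have hq : ∀ f : 𝒴 → Fin M, miBits (quantJoint p f) =
      ∑ m, (T A (quantJoint p f 0 m) (quantJoint p f 0 m + quantJoint p f 1 m) +
        T B (quantJoint p f 1 m) (quantJoint p f 0 m + quantJoint p f 1 m)) := by
    intro f
    have e0 : ∑ m, quantJoint p f 0 m = A := (sum_cells f u hus).2
    have e1 : ∑ m, quantJoint p f 1 m = B := (sum_cells f v hvs).2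
    simp only [miBits, tsum_fintype, Fin.sum_univ_two, e0, e1, Finset.sum_add_distrib]
    rfl
  have hqnn : ∀ (f : 𝒴 → Fin M) x m, 0 ≤ quantJoint p f x m := by
    intro f x m
    refine tsum_nonneg fun y => ?_
    split_ifs
    exacts [hnn x y, le_rfl]
  have hbdd : BddAbove (Set.range fun f : 𝒴 → Fin M => miBits (quantJoint p f)) := by
    refine ⟨A * Real.logb 2 (1 / A) + B * Real.logb 2 (1 / B), ?_⟩
    rintro _ ⟨f, rfl⟩
    have e0 : ∑ m, quantJoint p f 0 m = A := (sum_cells f u hus).2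
    have e1 : ∑ m, quantJoint p f 1 m = B := (sum_cells f v hvs).2
    have : A * Real.logb 2 (1 / A) + B * Real.logb 2 (1 / B) =
        ∑ m, (quantJoint p f 0 m * Real.logb 2 (1 / A) +
          quantJoint p f 1 m * Real.logb 2 (1 / B)) := by
      rw [Finset.sum_add_distrib, ← Finset.sum_mul, ← Finset.sum_mul, e0, e1]
    rw [this]
    simp only [hq f]
    refine Finset.sum_le_sum fun m _ => add_le_add (T_le hA0 (hqnn f 0 m) ?_)
      (T_le hB0 (hqnn f 1 m) ?_)
    · linarith [hqnn f 1 m]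
    · linarith [hqnn f 0 m]
  refine le_trans ?_ (le_ciSup hbdd f)
  simp only [hq f]
  set g : 𝒴 → ℝ := fun y => T A (u y) (u y + v y) + T B (v y) (u y + v y) with hg
  have hgs : Summable g := hTA.add hTB
  have hgsum : ∑' y, g y = β := by rw [← hmi]; exact hTA.tsum_add hTB
  have hcell : ∀ m, (∑' y, if f y = m then g y else 0) +
      β * (quantJoint p f 0 m + quantJoint p f 1 m) ≤
      r * (T A (quantJoint p f 0 m) (quantJoint p f 0 m + quantJoint p f 1 m) +
        T B (quantJoint p f 1 m) (quantJoint p f 0 m + quantJoint p f 1 m) +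
        β * (quantJoint p f 0 m + quantJoint p f 1 m)) := by
    intro m
    have hgm : ∀ y, T A (if f y = m then u y else 0)
          ((if f y = m then u y else 0) + (if f y = m then v y else 0)) +
        T B (if f y = m then v y else 0)
          ((if f y = m then u y else 0) + (if f y = m then v y else 0)) =
        if f y = m then g y else 0 := by
      intro y
      split_ifs
      · rfl
      · simp [T]
    have h := cell_bound hAp hBp hAB (by linarith : 0 < r)
      (fun y => if f y = m then u y else 0) (fun y => if f y = m then v y else 0)
      (fun y => by split_ifs; exacts [hu0 y, le_rfl])
      (fun y => by split_ifs; exacts [hv0 y, le_rfl])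
      ((sum_cells f u hus).1 m) ((sum_cells f v hvs).1 m) (fun y => f y = m)
      (fun y hy => by simp [hy])
      (fun y y' hy hy' => by
        simp only [hy, hy', if_true]
        exact hf y y' (hy.trans hy'.symm))
      (by
        refine ((sum_cells f g hgs).1 m).congr fun y => ?_
        exact (hgm y).symm)
    simp only [hgm] at h
    exact h
  have hS := Finset.sum_le_sum fun m (_ : m ∈ Finset.univ) => hcell m
  have e0 : ∑ m, quantJoint p f 0 m = A := (sum_cells f u hus).2
  have e1 : ∑ m, quantJoint p f 1 m = B := (sum_cells f v hvs).2
  have eW : ∑ m, β * (quantJoint p f 0 m + quantJoint p f 1 m) = β := by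
    rw [← Finset.mul_sum, Finset.sum_add_distrib, e0, e1, hAB, mul_one]
  rw [Finset.sum_add_distrib, (sum_cells f g hgs).2, hgsum, eW, ← Finset.mul_sum,
    Finset.sum_add_distrib, eW, hr, one_div_mul_eq_div, le_div_iff₀ hr0] at hS
  -- `(β + β) (1 - d/2) - β = η β`
  have : η * β = (β + β) * (1 - d / 2) - β := by rw [hd]; ring
  linarith
end
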